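/- arXiv:2111.13808 — 7 statements merged into one kernel-verified Lean document; each statement's English description precedes it below -/
import Mathlib

section
/- Let A, B ∈ ℝ^{n×n}. The pair {A+B, A−B} has the column W-property if and only if the matrix A + BD is nonsingular for every diagonal matrix D = diag(d_1,…,d_n) with d_i ∈ [−1,1] for all i = 1,…,n. -/
/-- `R` is a column representative of the pair `{M, N}`: each column of `R`
equals the corresponding column of `M` or of `N`. -/
def IsColumnRepresentative {n : ℕ} (M N R : Matrix (Fin n) (Fin n) ℝ) : Prop :=
  ∀ j : Fin n, (∀ i, R i j = M i j) ∨ (∀ i, R i j = N i j)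

/-- The pair `{M, N}` has the column W-property: the determinants of all its
column representative matrices are all positive or all negative. -/
def ColumnWProperty {n : ℕ} (M N : Matrix (Fin n) (Fin n) ℝ) : Prop :=
  (∀ R, IsColumnRepresentative M N R → 0 < R.det) ∨
    (∀ R, IsColumnRepresentative M N R → R.det < 0)

/-!
For `d ∈ {1, -1}ⁿ` the matrices `A + B * diagonal d` are exactly the column representatives of
`{A + B, A - B}`. Since `det (A + B * diagonal d)` is affine in each single `d j`, a strict sign
on these vertices propagates to the cube `[-1, 1]ⁿ`, one coordinate at a time. Conversely, the cube
is connected, so a continuous function that does not vanish on it has constant sign there.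
-/

open Function Set

section Sign

variable {ι : Type*} [DecidableEq ι] {E : ι → Type*}

theorem pi_convexHull_subset_of_convex_preimage_update [Finite ι] {𝕜 : Type*} [Semiring 𝕜]
    [PartialOrder 𝕜] [∀ i, AddCommMonoid (E i)] [∀ i, Module 𝕜 (E i)]
    {s : Set (∀ i, E i)} {t : ∀ i, Set (E i)}
    (hs : ∀ x i, Convex 𝕜 (update x i ⁻¹' s)) (ht : univ.pi t ⊆ s) :
    univ.pi (fun i => convexHull 𝕜 (t i)) ⊆ s := by
  cases nonempty_fintype ι
  suffices h : ∀ J : Finset ι,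
      univ.pi (fun i => if i ∈ J then convexHull 𝕜 (t i) else t i) ⊆ s by
    simpa only [Finset.mem_univ, if_true] using h Finset.univ
  intro J
  induction J using Finset.induction_on with
  | empty => simpa only [Finset.notMem_empty, if_false] using ht
  | insert j J hj ih =>
    intro x hx
    have vertices_mem : t j ⊆ update x j ⁻¹' s := by
      intro y hy
      refine ih fun i _ => ?_
      obtain rfl | hij := eq_or_ne i j
      · simpa [hj] using hy
      · simpa [hij] using hx i (mem_univ i)
    have hxj : x j ∈ convexHull 𝕜 (t j) := by simpa using hx j (mem_univ j)
    simpa using convexHull_min vertices_mem (hs x j) hxj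

theorem forall_lt_or_forall_gt_of_isPreconnected {X α : Type*} [TopologicalSpace X]
    [LinearOrder α] [TopologicalSpace α] [OrderClosedTopology α] {s : Set X} {f : X → α} {c : α}
    (hs : IsPreconnected s) (hf : ContinuousOn f s) (hc : ∀ x ∈ s, f x ≠ c) :
    (∀ x ∈ s, c < f x) ∨ ∀ x ∈ s, f x < c := by
  by_contra! ⟨⟨x, hx, hxc⟩, y, hy, hcy⟩
  obtain ⟨z, hz, hzc⟩ := hs.intermediate_value hx hy hf ⟨hxc, hcy⟩
  exact hc z hz hzc

theorem forall_lt_or_forall_gt_iff_forall_pi_convexHull_ne [Finite ι]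
    [∀ i, AddCommGroup (E i)] [∀ i, Module ℝ (E i)]
    [∀ i, TopologicalSpace (E i)] [∀ i, ContinuousAdd (E i)] [∀ i, ContinuousSMul ℝ (E i)]
    {α : Type*} [LinearOrder α] [TopologicalSpace α] [OrderClosedTopology α]
    {f : (∀ i, E i) → α} {c : α} {t : ∀ i, Set (E i)} (hf : Continuous f)
    (hquasi : ∀ x i, QuasilinearOn ℝ univ fun y => f (update x i y)) :
    ((∀ x ∈ univ.pi t, c < f x) ∨ ∀ x ∈ univ.pi t, f x < c) ↔
      ∀ x ∈ univ.pi (fun i => convexHull ℝ (t i)), f x ≠ c := by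
  constructor
  · have convex_gt : ∀ x i, Convex ℝ (update x i ⁻¹' {x | c < f x}) := fun x i => by
      simpa using (hquasi x i).2.convex_gt c
    have convex_lt : ∀ x i, Convex ℝ (update x i ⁻¹' {x | f x < c}) := fun x i => by
      simpa using (hquasi x i).1.convex_lt c
    rintro (h | h) x hx
    · exact (pi_convexHull_subset_of_convex_preimage_update convex_gt h hx).ne'
    · exact (pi_convexHull_subset_of_convex_preimage_update convex_lt h hx).ne
  · intro h
    have hpre : IsPreconnected (univ.pi fun i => convexHull ℝ (t i)) :=
      isPreconnected_univ_pi fun i => (convex_convexHull ℝ (t i)).isPreconnected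
    have hsub : univ.pi t ⊆ univ.pi fun i => convexHull ℝ (t i) :=
      pi_mono fun i _ => subset_convexHull ℝ (t i)
    exact (forall_lt_or_forall_gt_of_isPreconnected hpre hf.continuousOn h).imp
      (fun hpos x hx => hpos x (hsub hx)) (fun hneg x hx => hneg x (hsub hx))

end Sign

section Det

variable {n R : Type*} [Fintype n] [DecidableEq n] [CommRing R]

theorem add_mul_diagonal_update (A B : Matrix n n R) (d : n → R) (j : n) (t : R) :
    A + B * Matrix.diagonal (update d j t) =
      (A + B * Matrix.diagonal d).updateCol j (A.col j + t • B.col j) := by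
  ext i k
  obtain rfl | hk := eq_or_ne k j
  · simp [mul_comm]
  · simp [hk]

theorem det_add_mul_diagonal_update_combo (A B : Matrix n n R) (d : n → R) (j : n)
    {a b : R} (hab : a + b = 1) (x y : R) :
    (A + B * Matrix.diagonal (update d j (a * x + b * y))).det =
      a * (A + B * Matrix.diagonal (update d j x)).det +
        b * (A + B * Matrix.diagonal (update d j y)).det := by
  have hcol : A.col j + (a * x + b * y) • B.col j =
      a • (A.col j + x • B.col j) + b • (A.col j + y • B.col j) := by
    linear_combination (norm := module) -hab • A.col j
  simp only [add_mul_diagonal_update, hcol, Matrix.det_updateCol_add, Matrix.det_updateCol_smul]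

theorem quasilinearOn_det_add_mul_diagonal_update [LinearOrder R] [IsOrderedRing R]
    (A B : Matrix n n R) (d : n → R) (j : n) :
    QuasilinearOn R univ fun t => (A + B * Matrix.diagonal (update d j t)).det := by
  have hcombo := @det_add_mul_diagonal_update_combo _ _ _ _ _ A B d j
  exact ⟨ConvexOn.quasiconvexOn ⟨convex_univ, fun x _ y _ _ _ _ _ hab => (hcombo hab x y).le⟩,
    ConcaveOn.quasiconcaveOn ⟨convex_univ, fun x _ y _ _ _ _ _ hab => (hcombo hab x y).ge⟩⟩

end Det

theorem isColumnRepresentative_add_sub_iff {n : ℕ} {A B R : Matrix (Fin n) (Fin n) ℝ} :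
    IsColumnRepresentative (A + B) (A - B) R ↔
      ∃ d ∈ univ.pi fun _ => ({1, -1} : Set ℝ), A + B * Matrix.diagonal d = R := by
  constructor
  · intro hR
    have hcol : ∀ j, ∃ t ∈ ({1, -1} : Set ℝ), ∀ i, A i j + B i j * t = R i j := fun j =>
      (hR j).elim (fun h => ⟨1, by simp, fun i => by simp [h i]⟩)
        (fun h => ⟨-1, by simp, fun i => by simp [h i, sub_eq_add_neg]⟩)
    choose d hd hdR using hcol
    exact ⟨d, fun j _ => hd j, by ext i j; simp [hdR]⟩
  · rintro ⟨d, hd, rfl⟩ j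
    exact (hd j (mem_univ j)).imp (fun h i => by simp [h])
      (fun h i => by simp [mem_singleton_iff.mp h, sub_eq_add_neg])

theorem columnWProperty_add_sub_iff {n : ℕ} {A B : Matrix (Fin n) (Fin n) ℝ} :
    ColumnWProperty (A + B) (A - B) ↔
      (∀ d ∈ univ.pi fun _ => ({1, -1} : Set ℝ), 0 < (A + B * Matrix.diagonal d).det) ∨
        ∀ d ∈ univ.pi fun _ => ({1, -1} : Set ℝ), (A + B * Matrix.diagonal d).det < 0 := by
  simp only [ColumnWProperty, isColumnRepresentative_add_sub_iff, forall_exists_index, and_imp,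
    forall_apply_eq_imp_iff₂]

theorem convexHull_one_neg_one : convexHull ℝ ({1, -1} : Set ℝ) = Icc (-1) 1 := by
  rw [convexHull_pair, segment_symm, segment_eq_Icc (by norm_num)]

theorem stmt0 {n : ℕ} (A B : Matrix (Fin n) (Fin n) ℝ) :
    ColumnWProperty (A + B) (A - B) ↔
      ∀ d : Fin n → ℝ, (∀ i, d i ∈ Set.Icc (-1 : ℝ) 1) →
        (A + B * Matrix.diagonal d).det ≠ 0 := by
  have hcont : Continuous fun d : Fin n → ℝ => (A + B * Matrix.diagonal d).det := by fun_prop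
  rw [columnWProperty_add_sub_iff, forall_lt_or_forall_gt_iff_forall_pi_convexHull_ne hcont
    (quasilinearOn_det_add_mul_diagonal_update A B)]
  simp only [convexHull_one_neg_one, mem_univ_pi]
end

section
/- Let A, B ∈ ℝ^{n×n}. Then det[(A+B)D₁ + (A−B)D₂] ≠ 0 for all nonnegative diagonal matrices D₁, D₂ ∈ ℝ^{n×n} with every diagonal entry of D₁ + D₂ positive, if and only if det(A + BD) ≠ 0 for every diagonal matrix D = diag(d_1,…,d_n) with d_i ∈ [−1,1] for all i = 1,…,n. -/
/-!
If the diagonal matrices `D₁`, `D₂`, `D` satisfy `D₁ - D₂ = D (D₁ + D₂)`, then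
`(A + B) D₁ + (A - B) D₂ = (A + B D) (D₁ + D₂)`, so the two matrices are singular together
whenever `D₁ + D₂` is invertible. Given `D₁` and `D₂`, take for `D` the entrywise quotient of
`D₁ - D₂` by `D₁ + D₂`; given `D`, take `D₁ = 1 + D` and `D₂ = 1 - D`.
-/

section MatrixIdentities

open Matrix

variable {m n R : Type*} [Fintype n] [DecidableEq n]

theorem add_mul_diagonal_add_sub_mul_diagonal [NonUnitalRing R] (A B : Matrix m n R)
    {d d₁ d₂ : n → R} (hd : d₁ - d₂ = d * (d₁ + d₂)) :
    (A + B) * diagonal d₁ + (A - B) * diagonal d₂ =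
      (A + B * diagonal d) * diagonal (d₁ + d₂) := by
  calc
    (A + B) * diagonal d₁ + (A - B) * diagonal d₂
      = A * (diagonal d₁ + diagonal d₂) + B * (diagonal d₁ - diagonal d₂) := by
        simp only [Matrix.add_mul, Matrix.sub_mul, Matrix.mul_add, Matrix.mul_sub]
        abel
    _ = A * diagonal (d₁ + d₂) + B * diagonal (d * (d₁ + d₂)) := by
        rw [diagonal_add, diagonal_sub, ← hd]
        rfl
    _ = (A + B * diagonal d) * diagonal (d₁ + d₂) := by
        rw [Matrix.add_mul, Matrix.mul_assoc, diagonal_mul_diagonal']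
        rfl

theorem det_add_mul_diagonal_add_sub_mul_diagonal [CommRing R] (A B : Matrix n n R)
    {d d₁ d₂ : n → R} (hd : d₁ - d₂ = d * (d₁ + d₂)) :
    ((A + B) * diagonal d₁ + (A - B) * diagonal d₂).det =
      (A + B * diagonal d).det * ∏ i, (d₁ i + d₂ i) := by
  rw [add_mul_diagonal_add_sub_mul_diagonal A B hd, det_mul, det_diagonal]
  rfl

end MatrixIdentities

theorem sub_div_add_mem_Icc {K : Type*} [Field K] [LinearOrder K] [IsStrictOrderedRing K]
    {a b : K} (ha : 0 ≤ a) (hb : 0 ≤ b) : (a - b) / (a + b) ∈ Set.Icc (-1) 1 := by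
  have hab : 0 ≤ a + b := add_nonneg ha hb
  have h_abs : |a - b| ≤ a + b := abs_le.2 ⟨by linarith, by linarith⟩
  rw [Set.mem_Icc, ← abs_le, abs_div, abs_of_nonneg hab]
  exact div_le_one_of_le₀ h_abs hab

theorem stmt1_general {ι K : Type*} [Fintype ι] [DecidableEq ι] [Field K] [LinearOrder K]
    [IsStrictOrderedRing K] (A B : Matrix ι ι K) :
    (∀ d₁ d₂ : ι → K, (∀ i, 0 ≤ d₁ i) → (∀ i, 0 ≤ d₂ i) → (∀ i, 0 < d₁ i + d₂ i) →
        ((A + B) * Matrix.diagonal d₁ + (A - B) * Matrix.diagonal d₂).det ≠ 0) ↔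
      ∀ d : ι → K, (∀ i, d i ∈ Set.Icc (-1 : K) 1) →
        (A + B * Matrix.diagonal d).det ≠ 0 := by
  constructor
  · intro h d hd
    have h_ratio : (1 + d) - (1 - d) = d * ((1 + d) + (1 - d)) := by ring
    have h_det : ((A + B) * Matrix.diagonal (1 + d) + (A - B) * Matrix.diagonal (1 - d)).det ≠ 0 :=
      h (1 + d) (1 - d) (fun i ↦ neg_le_iff_add_nonneg'.1 (hd i).1)
        (fun i ↦ sub_nonneg.2 (hd i).2) fun i ↦ by simp
    rw [det_add_mul_diagonal_add_sub_mul_diagonal A B h_ratio] at h_det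
    exact left_ne_zero_of_mul h_det
  · intro h d₁ d₂ h₁ h₂ h_pos
    have h_ratio : d₁ - d₂ = (d₁ - d₂) / (d₁ + d₂) * (d₁ + d₂) :=
      funext fun i ↦ (div_mul_cancel₀ _ (h_pos i).ne').symm
    rw [det_add_mul_diagonal_add_sub_mul_diagonal A B h_ratio]
    exact mul_ne_zero (h _ fun i ↦ sub_div_add_mem_Icc (h₁ i) (h₂ i))
      (Finset.prod_ne_zero_iff.2 fun i _ ↦ (h_pos i).ne')

theorem stmt1 {n : ℕ} (A B : Matrix (Fin n) (Fin n) ℝ) :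
    (∀ d₁ d₂ : Fin n → ℝ, (∀ i, 0 ≤ d₁ i) → (∀ i, 0 ≤ d₂ i) → (∀ i, 0 < d₁ i + d₂ i) →
        ((A + B) * Matrix.diagonal d₁ + (A - B) * Matrix.diagonal d₂).det ≠ 0) ↔
      ∀ d : Fin n → ℝ, (∀ i, d i ∈ Set.Icc (-1 : ℝ) 1) →
        (A + B * Matrix.diagonal d).det ≠ 0 :=
  stmt1_general A B
end

section
/- Let z = (μ,x) ∈ ℝ × ℝⁿ be such that either μ ≠ 0 or x_i ≠ 0 for all i. Then H is Fréchet differentiable at z and its derivative is the linear map H'(z) : (Δμ, Δx) ↦ (Δμ, AΔx + B(Δμ·V₁ + V₂Δx)), where V₁ ∈ ℝⁿ has entries (V₁)_i = μ/√(μ² + x_i²) − 1 and V₂ = diag(x_i/√(μ² + x_i²)). -/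
/-- The componentwise smoothing map `Φ(μ,x)_i = √(μ² + x_i²) − μ`. -/
noncomputable def PhiV {n : ℕ} (μ : ℝ) (x : Fin n → ℝ) : Fin n → ℝ :=
  fun i => Real.sqrt (μ ^ 2 + x i ^ 2) - μ

/-- `H(μ, x) = (μ, Ax + BΦ(μ,x) − b)`. -/
noncomputable def Hfun {n : ℕ} (A B : Matrix (Fin n) (Fin n) ℝ) (b : Fin n → ℝ)
    (z : ℝ × (Fin n → ℝ)) : ℝ × (Fin n → ℝ) :=
  (z.1, A.mulVec z.2 + B.mulVec (PhiV z.1 z.2) - b)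

/-- The smoothing `√(μ² + t²) − μ` of `|t|`, with smoothing parameter `μ`; `PhiV` applies it
componentwise. -/
noncomputable def smoothAbs (μ t : ℝ) : ℝ :=
  √(μ ^ 2 + t ^ 2) - μ

/-- The linear map `(Δμ, Δx) ↦ Δμ • V₁ + V₂ Δx`, the candidate derivative at `(μ, x)` of the
componentwise `smoothAbs`. A coordinate with `μ = x i = 0` gets the junk value `-Δμ`. -/
noncomputable def smoothAbsPiDeriv {ι : Type*} (μ : ℝ) (x : ι → ℝ) :
    ℝ × (ι → ℝ) →L[ℝ] ι → ℝ :=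
  .pi fun i =>
    (μ / √(μ ^ 2 + x i ^ 2) - 1) • .fst ℝ ℝ (ι → ℝ) +
      (x i / √(μ ^ 2 + x i ^ 2)) • (.proj i ∘L .snd ℝ ℝ (ι → ℝ))

theorem smoothAbsPiDeriv_apply {ι : Type*} (μ : ℝ) (x : ι → ℝ) (Δμ : ℝ) (Δx : ι → ℝ) :
    smoothAbsPiDeriv μ x (Δμ, Δx) = fun i =>
      Δμ * (μ / √(μ ^ 2 + x i ^ 2) - 1) + x i / √(μ ^ 2 + x i ^ 2) * Δx i := by
  funext i
  simp [smoothAbsPiDeriv, mul_comm Δμ]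

section StrictDerivative

variable {E : Type*} [NormedAddCommGroup E] [NormedSpace ℝ E]
  {f g : E → ℝ} {f' g' : E →L[ℝ] ℝ} {z : E}

theorem hasStrictFDerivAt_sqrt_sq_add_sq (hf : HasStrictFDerivAt f f' z)
    (hg : HasStrictFDerivAt g g' z) (hz : f z ≠ 0 ∨ g z ≠ 0) :
    HasStrictFDerivAt (fun w => √(f w ^ 2 + g w ^ 2))
      ((f z / √(f z ^ 2 + g z ^ 2)) • f' + (g z / √(f z ^ 2 + g z ^ 2)) • g') z := by
  have radicand_ne_zero : f z ^ 2 + g z ^ 2 ≠ 0 := by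
    rcases hz with h | h <;> positivity
  refine (((hf.pow 2).add (hg.pow 2)).sqrt radicand_ne_zero).congr_fderiv ?_
  ext v
  simp only [Pi.add_apply, one_div, mul_inv_rev, Nat.add_one_sub_one, pow_one, nsmul_eq_mul,
    Nat.cast_ofNat, smul_add, add_apply, smul_apply, smul_eq_mul]
  field_simp

theorem hasStrictFDerivAt_smoothAbs (hf : HasStrictFDerivAt f f' z)
    (hg : HasStrictFDerivAt g g' z) (hz : f z ≠ 0 ∨ g z ≠ 0) :
    HasStrictFDerivAt (fun w => smoothAbs (f w) (g w))
      ((f z / √(f z ^ 2 + g z ^ 2) - 1) • f' + (g z / √(f z ^ 2 + g z ^ 2)) • g') z := by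
  refine ((hasStrictFDerivAt_sqrt_sq_add_sq hf hg hz).sub hf).congr_fderiv ?_
  module

end StrictDerivative

section Pi

variable {ι : Type*} [Finite ι] {μ : ℝ} {x : ι → ℝ}

theorem hasStrictFDerivAt_smoothAbs_pi (hz : ∀ i, μ ≠ 0 ∨ x i ≠ 0) :
    HasStrictFDerivAt (fun z : ℝ × (ι → ℝ) => fun i => smoothAbs z.1 (z.2 i))
      (smoothAbsPiDeriv μ x) (μ, x) := by
  cases nonempty_fintype ι
  exact hasStrictFDerivAt_pi.2 fun i =>
    hasStrictFDerivAt_smoothAbs (z := (μ, x)) hasStrictFDerivAt_fst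
      (ContinuousLinearMap.proj i ∘L .snd ℝ ℝ (ι → ℝ)).hasStrictFDerivAt (hz i)

theorem stmt9_general {F : Type*} [NormedAddCommGroup F] [NormedSpace ℝ F]
    (A B : (ι → ℝ) →L[ℝ] F) (b : F) (hz : μ ≠ 0 ∨ ∀ i, x i ≠ 0) :
    HasStrictFDerivAt
      (fun z : ℝ × (ι → ℝ) => (z.1, A z.2 + B (fun i => smoothAbs z.1 (z.2 i)) - b))
      ((ContinuousLinearMap.fst ℝ ℝ (ι → ℝ)).prod
        (A ∘L .snd ℝ ℝ (ι → ℝ) + B ∘L smoothAbsPiDeriv μ x)) (μ, x) := by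
  cases nonempty_fintype ι
  have hA : HasStrictFDerivAt (fun z : ℝ × (ι → ℝ) => A z.2) (A ∘L .snd ℝ ℝ (ι → ℝ)) (μ, x) :=
    (A ∘L .snd ℝ ℝ (ι → ℝ)).hasStrictFDerivAt
  have hB : HasStrictFDerivAt (fun z : ℝ × (ι → ℝ) => B fun i => smoothAbs z.1 (z.2 i))
      (B ∘L smoothAbsPiDeriv μ x) (μ, x) :=
    B.hasStrictFDerivAt.comp (μ, x) (hasStrictFDerivAt_smoothAbs_pi (forall_or_left.2 hz))
  exact hasStrictFDerivAt_fst.prodMk ((hA.add hB).sub_const b)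

end Pi

theorem stmt9 {n : ℕ} (A B : Matrix (Fin n) (Fin n) ℝ) (b : Fin n → ℝ)
    (μ : ℝ) (x : Fin n → ℝ) (hz : μ ≠ 0 ∨ ∀ i, x i ≠ 0) :
    ∃ L : (ℝ × (Fin n → ℝ)) →L[ℝ] (ℝ × (Fin n → ℝ)),
      HasFDerivAt (Hfun A B b) L (μ, x) ∧
        ∀ Δμ : ℝ, ∀ Δx : Fin n → ℝ,
          L (Δμ, Δx) =
            (Δμ,
              A.mulVec Δx +
                B.mulVec (fun i =>
                  Δμ * (μ / Real.sqrt (μ ^ 2 + x i ^ 2) - 1) +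
                    (x i / Real.sqrt (μ ^ 2 + x i ^ 2)) * Δx i)) :=
  ⟨_, (stmt9_general A.mulVecLin.toContinuousLinearMap B.mulVecLin.toContinuousLinearMap b
    hz).hasFDerivAt, fun Δμ Δx => by rw [← smoothAbsPiDeriv_apply]; rfl⟩
end

section
/- Suppose A + BD is nonsingular for every diagonal matrix D = diag(d_1,…,d_n) with d_i ∈ [−1,1] for all i. Then for every z = (μ,x) ∈ ℝ × ℝⁿ with μ > 0, the matrix A + B·diag(x_i/√(μ² + x_i²)) is nonsingular, and the linear map H'(z) : (Δμ, Δx) ↦ (Δμ, AΔx + B(Δμ·V₁ + V₂Δx)) is bijective, where V₁ ∈ ℝⁿ has entries (V₁)_i = μ/√(μ² + x_i²) − 1 and V₂ = diag(x_i/√(μ² + x_i²)). -/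
/-!
Since `μ ≠ 0`, each ratio `x i / √(μ ^ 2 + x i ^ 2)` lies in `(-1, 1)`, so the matrix is one of
those assumed nonsingular. The `μ`-component of the derivative is the identity, so the derivative
is block triangular: for a fixed `Δμ` it acts on `Δx` as that matrix followed by a translation.
-/

open Function Matrix Set

theorem div_sqrt_sq_add_sq_mem_Ioo {a : ℝ} (ha : a ≠ 0) (t : ℝ) :
    t / √(a ^ 2 + t ^ 2) ∈ Ioo (-1) 1 := by
  have habs : |t| < √(a ^ 2 + t ^ 2) := by
    rw [Real.lt_sqrt (abs_nonneg t), sq_abs]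
    exact lt_add_of_pos_left _ (sq_pos_of_ne_zero ha)
  have hsqrt : 0 < √(a ^ 2 + t ^ 2) := (abs_nonneg t).trans_lt habs
  rw [mem_Ioo, ← abs_lt, abs_div, abs_of_pos hsqrt]
  exact (div_lt_one hsqrt).mpr habs

theorem bijective_prodMk_fst {α β γ : Type*} {f : α → β → γ} (hf : ∀ a, Bijective (f a)) :
    Bijective fun p : α × β => (p.1, f p.1 p.2) :=
  (Equiv.prodShear (Equiv.refl α) fun a => Equiv.ofBijective (f a) (hf a)).bijective

section

variable {m n R : Type*} [Fintype n] [DecidableEq n]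

theorem mulVec_add_mulVec_add_mul [NonUnitalSemiring R] (A B : Matrix m n R) (v d y : n → R) :
    A *ᵥ y + B *ᵥ (v + d * y) = (A + B * diagonal d) *ᵥ y + B *ᵥ v := by
  have hd : d * y = diagonal d *ᵥ y := funext fun i => (mulVec_diagonal d y i).symm
  rw [hd, mulVec_add, add_mulVec, mulVec_mulVec]
  abel

theorem bijective_mulVec_add [CommRing R] {M : Matrix n n R} (hM : IsUnit M.det) (c : n → R) :
    Bijective fun y => M *ᵥ y + c :=
  have hMulVec : Bijective M.mulVec := (M.toLinearEquiv' (M.invertibleOfIsUnitDet hM)).bijective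
  (Equiv.addRight c).bijective.comp hMulVec

theorem bijective_prodMk_mulVec_add_mulVec [CommRing R] {A B : Matrix n n R} {d : n → R}
    (hdet : IsUnit (A + B * diagonal d).det) (v : n → R) :
    Bijective fun Δ : R × (n → R) =>
      (Δ.1, A *ᵥ Δ.2 + B *ᵥ fun i => Δ.1 * v i + d i * Δ.2 i) := by
  refine bijective_prodMk_fst (f := fun (t : R) y => A *ᵥ y + B *ᵥ (t • v + d * y)) fun t => ?_
  simp only [mulVec_add_mulVec_add_mul]
  exact bijective_mulVec_add hdet _

end

theorem stmt10_general {ι : Type*} [Fintype ι] [DecidableEq ι] (A B : Matrix ι ι ℝ)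
    (hAB : ∀ d : ι → ℝ, (∀ i, d i ∈ Ioo (-1 : ℝ) 1) → (A + B * diagonal d).det ≠ 0)
    {μ : ℝ} (hμ : μ ≠ 0) (x : ι → ℝ) :
    (A + B * diagonal fun i => x i / √(μ ^ 2 + x i ^ 2)).det ≠ 0 ∧
      Bijective fun Δ : ℝ × (ι → ℝ) =>
        (Δ.1, A *ᵥ Δ.2 + B *ᵥ fun i =>
          Δ.1 * (μ / √(μ ^ 2 + x i ^ 2) - 1) + x i / √(μ ^ 2 + x i ^ 2) * Δ.2 i) := by
  have hdet : (A + B * diagonal fun i => x i / √(μ ^ 2 + x i ^ 2)).det ≠ 0 :=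
    hAB _ fun i => div_sqrt_sq_add_sq_mem_Ioo hμ (x i)
  exact ⟨hdet, bijective_prodMk_mulVec_add_mulVec hdet.isUnit _⟩

theorem stmt10 {n : ℕ} (A B : Matrix (Fin n) (Fin n) ℝ)
    (hAB : ∀ d : Fin n → ℝ, (∀ i, d i ∈ Set.Icc (-1 : ℝ) 1) →
      (A + B * Matrix.diagonal d).det ≠ 0)
    (μ : ℝ) (x : Fin n → ℝ) (hμ : 0 < μ) :
    (A + B * Matrix.diagonal (fun i => x i / Real.sqrt (μ ^ 2 + x i ^ 2))).det ≠ 0 ∧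
      Function.Bijective (fun Δ : ℝ × (Fin n → ℝ) =>
        ((Δ.1,
          A.mulVec Δ.2 +
            B.mulVec (fun i =>
              Δ.1 * (μ / Real.sqrt (μ ^ 2 + x i ^ 2) - 1) +
                (x i / Real.sqrt (μ ^ 2 + x i ^ 2)) * Δ.2 i)) : ℝ × (Fin n → ℝ))) :=
  stmt10_general A B (fun d hd => hAB d fun i => Ioo_subset_Icc_self (hd i)) hμ.ne' x
end

section
/- Suppose A + BD is nonsingular for every diagonal matrix D = diag(d_1,…,d_n) with d_i ∈ [−1,1] for all i. Then for every Λ > 0, the level set L(Λ) = { z = (μ,x) ∈ ℝ × ℝⁿ : ‖H(z)‖ ≤ Λ } is bounded, where ‖·‖ is the Euclidean norm on ℝ × ℝⁿ. -/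
/-- The vector part of `H`: `Ax + BΦ(μ,x) − b`. -/
noncomputable def Hvec {n : ℕ} (A B : Matrix (Fin n) (Fin n) ℝ) (b : Fin n → ℝ)
    (μ : ℝ) (x : Fin n → ℝ) : Fin n → ℝ :=
  A.mulVec x + B.mulVec (PhiV μ x) - b

/-- The squared Euclidean norm of `H(μ,x) = (μ, Ax + BΦ(μ,x) − b)`,
i.e. `‖H(z)‖² = μ² + ‖Ax + BΦ(μ,x) − b‖²`. -/
noncomputable def HnormSq {n : ℕ} (A B : Matrix (Fin n) (Fin n) ℝ) (b : Fin n → ℝ)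
    (μ : ℝ) (x : Fin n → ℝ) : ℝ :=
  μ ^ 2 + ∑ i, Hvec A B b μ x i ^ 2

/-!
The map `F x = A x + B |x|` is the part of `H` that dominates at infinity: `Φ(μ, x)` differs from
`|x|` by at most `2 |μ|` in every coordinate, and `μ` is bounded on a level set, so `F x` is bounded
there. Since `F` is continuous and positively homogeneous, compactness of the unit sphere bounds
`‖F x‖` below by a positive multiple of `‖x‖` as soon as `F` has no nonzero root, and so `x` is
bounded as well. Finally `F x = (A + B D) x` for the diagonal matrix `D` of signs of `x`, so
nonsingularity of `A + B D` rules out a nonzero root.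
-/

section PositivelyHomogeneous

variable {E F : Type*} [NormedAddCommGroup E] [NormedSpace ℝ E] [ProperSpace E]
  [NormedAddCommGroup F] [NormedSpace ℝ F]

theorem exists_pos_mul_norm_le_of_posHomogeneous {f : E → F} (hf : Continuous f)
    (hsmul : ∀ t : ℝ, 0 < t → ∀ x, f (t • x) = t • f x) (hker : ∀ x, f x = 0 → x = 0) :
    ∃ c : ℝ, 0 < c ∧ ∀ x, c * ‖x‖ ≤ ‖f x‖ := by
  have hpos : ∀ u ∈ Metric.sphere (0 : E) 1, 0 < ‖f u‖ := fun u hu =>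
    norm_pos_iff.2 fun hfu => ne_zero_of_mem_unit_sphere ⟨u, hu⟩ (hker u hfu)
  obtain ⟨c, hc, hcf⟩ := (isCompact_sphere (0 : E) 1).exists_forall_le' hf.norm.continuousOn hpos
  refine ⟨c, hc, fun x => ?_⟩
  rcases eq_or_ne x 0 with rfl | hx
  · simp
  have hnorm : 0 < ‖x‖ := norm_pos_iff.2 hx
  have hunit : ‖x‖⁻¹ • x ∈ Metric.sphere (0 : E) 1 := by
    simp [norm_smul, hnorm.ne']
  calc
    c * ‖x‖ ≤ ‖f (‖x‖⁻¹ • x)‖ * ‖x‖ := by gcongr; exact hcf _ hunit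
    _ = ‖f x‖ := by
      rw [hsmul _ (inv_pos.2 hnorm), norm_smul, norm_inv, norm_norm, mul_right_comm,
        inv_mul_cancel₀ hnorm.ne', one_mul]

end PositivelyHomogeneous

section AbsoluteValueMap

open Matrix

variable {m n : Type*} [Fintype n]

/-- The left-hand side `A x + B |x|` of the generalized absolute value equation, with `|x|` taken
componentwise. It is the limit of `A x + B Φ(μ, x)` as `μ → 0`. -/
def absValueMap (A B : Matrix m n ℝ) (x : n → ℝ) : m → ℝ :=
  A *ᵥ x + B *ᵥ |x|

theorem continuous_absValueMap (A B : Matrix m n ℝ) : Continuous (absValueMap A B) :=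
  have habs : Continuous fun x : n → ℝ => |x| := continuous_pi fun i => (continuous_apply i).abs
  (continuous_const.matrix_mulVec continuous_id).add (continuous_const.matrix_mulVec habs)

theorem absValueMap_smul_of_pos (A B : Matrix m n ℝ) {t : ℝ} (ht : 0 < t) (x : n → ℝ) :
    absValueMap A B (t • x) = t • absValueMap A B x := by
  have habs : |t • x| = t • |x| := by
    ext i
    simp [abs_mul, abs_of_pos ht]
  simp only [absValueMap, habs, mulVec_smul, smul_add]

theorem absValueMap_eq_mulVec_sign [DecidableEq n] (A B : Matrix m n ℝ) (x : n → ℝ) :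
    absValueMap A B x = (A + B * diagonal fun i => (SignType.sign (x i) : ℝ)) *ᵥ x := by
  have habs : |x| = (diagonal fun i => (SignType.sign (x i) : ℝ)) *ᵥ x := by
    ext i
    rw [mulVec_diagonal, sign_mul_self, Pi.abs_apply]
  rw [absValueMap, habs, add_mulVec, mulVec_mulVec]

theorem eq_zero_of_absValueMap_eq_zero [DecidableEq n] {A B : Matrix n n ℝ}
    (hAB : ∀ d : n → ℝ, (∀ i, d i ∈ Set.Icc (-1 : ℝ) 1) → (A + B * diagonal d).det ≠ 0)
    (x : n → ℝ) (hx : absValueMap A B x = 0) : x = 0 := by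
  have hsign : ∀ i, (SignType.sign (x i) : ℝ) ∈ Set.Icc (-1 : ℝ) 1 := fun i => by
    cases SignType.sign (x i) <;> simp
  exact eq_zero_of_mulVec_eq_zero (hAB _ hsign) (absValueMap_eq_mulVec_sign A B x ▸ hx)

end AbsoluteValueMap

theorem abs_le_sqrt_sq_add_sq (a b : ℝ) : |b| ≤ √(a ^ 2 + b ^ 2) :=
  Real.abs_le_sqrt (le_add_of_nonneg_left (sq_nonneg a))

theorem sqrt_sq_add_sq_le_abs_add_abs (a b : ℝ) : √(a ^ 2 + b ^ 2) ≤ |a| + |b| :=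
  Real.sqrt_le_iff.2 ⟨by positivity, by
    nlinarith [sq_abs a, sq_abs b, mul_nonneg (abs_nonneg a) (abs_nonneg b)]⟩

section Smoothing

open Matrix

variable {n : ℕ}

theorem norm_PhiV_sub_abs_le (μ : ℝ) (x : Fin n → ℝ) : ‖PhiV μ x - |x|‖ ≤ 2 * |μ| := by
  refine (pi_norm_le_iff_of_nonneg (by positivity)).2 fun i => ?_
  have hlower := abs_le_sqrt_sq_add_sq μ (x i)
  have hupper := sqrt_sq_add_sq_le_abs_add_abs μ (x i)
  simp only [PhiV, Pi.sub_apply, Pi.abs_apply, Real.norm_eq_abs, abs_le]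
  constructor <;> linarith [le_abs_self μ, neg_abs_le μ]

theorem abs_le_sqrt_HnormSq (A B : Matrix (Fin n) (Fin n) ℝ) (b : Fin n → ℝ) (μ : ℝ)
    (x : Fin n → ℝ) : |μ| ≤ √(HnormSq A B b μ x) :=
  Real.abs_le_sqrt (le_add_of_nonneg_right (Finset.sum_nonneg fun _ _ => sq_nonneg _))

theorem norm_Hvec_le_sqrt_HnormSq (A B : Matrix (Fin n) (Fin n) ℝ) (b : Fin n → ℝ) (μ : ℝ)
    (x : Fin n → ℝ) : ‖Hvec A B b μ x‖ ≤ √(HnormSq A B b μ x) := by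
  refine (pi_norm_le_iff_of_nonneg (Real.sqrt_nonneg _)).2 fun i => Real.abs_le_sqrt ?_
  calc
    Hvec A B b μ x i ^ 2 ≤ ∑ j, Hvec A B b μ x j ^ 2 :=
      Finset.single_le_sum (f := fun j => Hvec A B b μ x j ^ 2)
        (fun _ _ => sq_nonneg _) (Finset.mem_univ i)
    _ ≤ HnormSq A B b μ x := le_add_of_nonneg_left (sq_nonneg μ)

theorem absValueMap_eq_Hvec_add_sub (A B : Matrix (Fin n) (Fin n) ℝ) (b : Fin n → ℝ) (μ : ℝ)
    (x : Fin n → ℝ) :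
    absValueMap A B x = Hvec A B b μ x + b - B *ᵥ (PhiV μ x - |x|) := by
  rw [absValueMap, Hvec, mulVec_sub]
  abel

open scoped Matrix.Norms.Operator in
theorem norm_absValueMap_le (A B : Matrix (Fin n) (Fin n) ℝ) (b : Fin n → ℝ) (μ : ℝ)
    (x : Fin n → ℝ) :
    ‖absValueMap A B x‖ ≤ ‖Hvec A B b μ x‖ + ‖b‖ + ‖B‖ * (2 * |μ|) :=
  calc
    ‖absValueMap A B x‖ = ‖Hvec A B b μ x + b - B *ᵥ (PhiV μ x - |x|)‖ := by
      rw [absValueMap_eq_Hvec_add_sub A B b μ x]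
    _ ≤ ‖Hvec A B b μ x‖ + ‖b‖ + ‖B *ᵥ (PhiV μ x - |x|)‖ :=
      (norm_sub_le _ _).trans (by gcongr; exact norm_add_le _ _)
    _ ≤ ‖Hvec A B b μ x‖ + ‖b‖ + ‖B‖ * (2 * |μ|) := by
      gcongr
      exact (linfty_opNorm_mulVec _ _).trans (by gcongr; exact norm_PhiV_sub_abs_le μ x)

end Smoothing

open scoped Matrix.Norms.Operator in
theorem stmt12_general {n : ℕ} (A B : Matrix (Fin n) (Fin n) ℝ) (b : Fin n → ℝ)
    (hker : ∀ x, absValueMap A B x = 0 → x = 0) (Λ : ℝ) :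
    Bornology.IsBounded
      {z : ℝ × (Fin n → ℝ) | Real.sqrt (HnormSq A B b z.1 z.2) ≤ Λ} := by
  obtain ⟨c, hc, hlower⟩ := exists_pos_mul_norm_le_of_posHomogeneous (continuous_absValueMap A B)
    (fun _ => absValueMap_smul_of_pos A B) hker
  refine isBounded_iff_forall_norm_le.2 ⟨max Λ ((Λ + ‖b‖ + ‖B‖ * (2 * Λ)) / c), ?_⟩
  rintro ⟨μ, x⟩ (hz : √(HnormSq A B b μ x) ≤ Λ)
  have hμ : |μ| ≤ Λ := (abs_le_sqrt_HnormSq A B b μ x).trans hz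
  have hH : ‖Hvec A B b μ x‖ ≤ Λ := (norm_Hvec_le_sqrt_HnormSq A B b μ x).trans hz
  have hx : c * ‖x‖ ≤ Λ + ‖b‖ + ‖B‖ * (2 * Λ) :=
    calc
      c * ‖x‖ ≤ ‖absValueMap A B x‖ := hlower x
      _ ≤ ‖Hvec A B b μ x‖ + ‖b‖ + ‖B‖ * (2 * |μ|) := norm_absValueMap_le A B b μ x
      _ ≤ Λ + ‖b‖ + ‖B‖ * (2 * Λ) := by gcongr
  exact max_le_max hμ ((le_div_iff₀' hc).2 hx)

theorem stmt12 {n : ℕ} (A B : Matrix (Fin n) (Fin n) ℝ) (b : Fin n → ℝ)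
    (hAB : ∀ d : Fin n → ℝ, (∀ i, d i ∈ Set.Icc (-1 : ℝ) 1) →
      (A + B * Matrix.diagonal d).det ≠ 0)
    (Λ : ℝ) (hΛ : 0 < Λ) :
    Bornology.IsBounded
      {z : ℝ × (Fin n → ℝ) | Real.sqrt (HnormSq A B b z.1 z.2) ≤ Λ} :=
  stmt12_general A B b (eq_zero_of_absValueMap_eq_zero hAB) Λ
end

section
/- Let z = (μ,x) ∈ ℝ × ℝⁿ with μ > 0, let 0 < β < μ, and let Δz = (Δμ, Δx) satisfy the perturbed Newton system H'(z)Δz = −H(z) + β e⁽¹⁾, where e⁽¹⁾ = (1, 0) ∈ ℝ × ℝⁿ and H'(z) : (Δμ, Δx) ↦ (Δμ, AΔx + B(Δμ·V₁ + V₂Δx)) with (V₁)_i = μ/√(μ² + x_i²) − 1 and V₂ = diag(x_i/√(μ² + x_i²)). Then the directional derivative of the merit function M(z) = ‖H(z)‖² at z along Δz satisfies M'(z)Δz = 2μ(β − μ) − 2‖Ax + BΦ(μ,x) − b‖² < 0; equivalently, ⟨H(z), H'(z)Δz⟩ = μβ − ‖H(z)‖² < 0. -/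
/-- The squared Euclidean norm of `H(μ,x)`: the merit function `M(z) = ‖H(z)‖²`. -/
noncomputable def Mfun {n : ℕ} (A B : Matrix (Fin n) (Fin n) ℝ) (b : Fin n → ℝ)
    (μ : ℝ) (x : Fin n → ℝ) : ℝ :=
  μ ^ 2 + ∑ i, Hvec A B b μ x i ^ 2

/-- The vector part of `H'(z)` applied to the direction `(Δμ, Δx)`:
`AΔx + B(Δμ·V₁ + V₂Δx)` with `(V₁)_i = μ/√(μ²+x_i²) − 1` and
`V₂ = diag(x_i/√(μ²+x_i²))`. -/
noncomputable def HDvec {n : ℕ} (A B : Matrix (Fin n) (Fin n) ℝ)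
    (μ : ℝ) (x : Fin n → ℝ) (Δμ : ℝ) (Δx : Fin n → ℝ) : Fin n → ℝ :=
  A.mulVec Δx +
    B.mulVec (fun i =>
      Δμ * (μ / Real.sqrt (μ ^ 2 + x i ^ 2) - 1) +
        (x i / Real.sqrt (μ ^ 2 + x i ^ 2)) * Δx i)

/-!
Along a differentiable curve `z(t)` the merit function satisfies `(M ∘ z)' = 2⟨H(z), H'(z) z'⟩`,
because `Φ` is differentiable wherever no `(μ, x_i)` vanishes. On the perturbed Newton system
`H'(z)Δz = −H(z) + β e⁽¹⁾` the pairing is `⟨H(z), H'(z)Δz⟩ = μβ − M(z)`, which is negative as soon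
as `μβ < μ²`, since `μ² ≤ M(z)`.
-/

open Matrix

theorem hasDerivAt_const_add_smul {𝕜 E : Type*} [NontriviallyNormedField 𝕜]
    [NormedAddCommGroup E] [NormedSpace 𝕜 E] (a v : E) (t : 𝕜) :
    HasDerivAt (fun s : 𝕜 => a + s • v) v t := by
  simpa only [one_smul] using ((hasDerivAt_id' t).smul_const v).const_add a

theorem hasDerivAt_const_mulVec {𝕜 ι κ : Type*} [NontriviallyNormedField 𝕜] [Finite ι] [Fintype κ]
    (C : Matrix ι κ 𝕜) {f : 𝕜 → κ → 𝕜} {f' : κ → 𝕜} {t : 𝕜} (hf : HasDerivAt f f' t) :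
    HasDerivAt (fun s => C *ᵥ f s) (C *ᵥ f') t := by
  have := Fintype.ofFinite ι
  exact hasDerivAt_pi.2 fun i =>
    HasDerivAt.fun_sum fun j _ => (hasDerivAt_pi.1 hf j).const_mul (C i j)

theorem hasDerivAt_sum_sq {𝕜 ι : Type*} [NontriviallyNormedField 𝕜] [Fintype ι]
    {f : 𝕜 → ι → 𝕜} {f' : ι → 𝕜} {t : 𝕜} (hf : HasDerivAt f f' t) :
    HasDerivAt (fun s => ∑ i, f s i ^ 2) (2 * ∑ i, f t i * f' i) t := by
  have hsq : ∀ i ∈ Finset.univ, HasDerivAt (fun s => f s i ^ 2) (2 * (f t i * f' i)) t := by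
    intro i _
    simpa [mul_assoc] using (hasDerivAt_pi.1 hf i).fun_pow 2
  simpa only [Finset.mul_sum] using HasDerivAt.fun_sum hsq

theorem hasDerivAt_sqrt_sq_add_sq {u v : ℝ → ℝ} {u' v' t : ℝ} (hu : HasDerivAt u u' t)
    (hv : HasDerivAt v v' t) (h : u t ^ 2 + v t ^ 2 ≠ 0) :
    HasDerivAt (fun s => √(u s ^ 2 + v s ^ 2))
      (u' * (u t / √(u t ^ 2 + v t ^ 2)) + v t / √(u t ^ 2 + v t ^ 2) * v') t := by
  refine (((hu.fun_pow 2).fun_add (hv.fun_pow 2)).sqrt h).congr_deriv ?_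
  push_cast
  ring

/-- The directional derivative `Δμ·V₁ + V₂Δx` of the smoothing map `Φ` at `(μ, x)` along
`(Δμ, Δx)`, written coordinatewise exactly as in `HDvec`. -/
noncomputable def PhiVDeriv {n : ℕ} (μ : ℝ) (x : Fin n → ℝ) (Δμ : ℝ) (Δx : Fin n → ℝ) :
    Fin n → ℝ :=
  fun i => Δμ * (μ / √(μ ^ 2 + x i ^ 2) - 1) + x i / √(μ ^ 2 + x i ^ 2) * Δx i

section Curve

variable {n : ℕ} {μ : ℝ → ℝ} {x : ℝ → Fin n → ℝ} {μ' : ℝ} {x' : Fin n → ℝ} {t : ℝ}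

theorem hasDerivAt_PhiV (hμ : HasDerivAt μ μ' t) (hx : HasDerivAt x x' t)
    (h : ∀ i, μ t ^ 2 + x t i ^ 2 ≠ 0) :
    HasDerivAt (fun s => PhiV (μ s) (x s)) (PhiVDeriv (μ t) (x t) μ' x') t := by
  refine hasDerivAt_pi.2 fun i => ?_
  have hsqrt := hasDerivAt_sqrt_sq_add_sq hμ (hasDerivAt_pi.1 hx i) (h i)
  refine (hsqrt.fun_sub hμ).congr_deriv ?_
  rw [PhiVDeriv]
  ring

theorem hasDerivAt_Hvec (A B : Matrix (Fin n) (Fin n) ℝ) (b : Fin n → ℝ)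
    (hμ : HasDerivAt μ μ' t) (hx : HasDerivAt x x' t) (h : ∀ i, μ t ^ 2 + x t i ^ 2 ≠ 0) :
    HasDerivAt (fun s => Hvec A B b (μ s) (x s)) (HDvec A B (μ t) (x t) μ' x') t :=
  ((hasDerivAt_const_mulVec A hx).fun_add
    (hasDerivAt_const_mulVec B (hasDerivAt_PhiV hμ hx h))).sub_const b

theorem hasDerivAt_Mfun (A B : Matrix (Fin n) (Fin n) ℝ) (b : Fin n → ℝ)
    (hμ : HasDerivAt μ μ' t) (hx : HasDerivAt x x' t) (h : ∀ i, μ t ^ 2 + x t i ^ 2 ≠ 0) :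
    HasDerivAt (fun s => Mfun A B b (μ s) (x s))
      (2 * (μ t * μ' +
        ∑ i, Hvec A B b (μ t) (x t) i * HDvec A B (μ t) (x t) μ' x' i)) t := by
  refine ((hμ.fun_pow 2).fun_add (hasDerivAt_sum_sq (hasDerivAt_Hvec A B b hμ hx h))).congr_deriv ?_
  push_cast
  ring

end Curve

section Newton

variable {n : ℕ} (A B : Matrix (Fin n) (Fin n) ℝ) (b : Fin n → ℝ) (μ : ℝ) (x : Fin n → ℝ)

theorem hasDerivAt_Mfun_line (hμ : μ ≠ 0) (Δμ : ℝ) (Δx : Fin n → ℝ) :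
    HasDerivAt (fun t : ℝ => Mfun A B b (μ + t * Δμ) (x + t • Δx))
      (2 * (μ * Δμ + ∑ i, Hvec A B b μ x i * HDvec A B μ x Δμ Δx i)) 0 := by
  have hne : ∀ i, (μ + (0 : ℝ) • Δμ) ^ 2 + (x + (0 : ℝ) • Δx) i ^ 2 ≠ 0 := by
    intro i
    rw [zero_smul, add_zero]
    positivity
  simpa only [smul_eq_mul, zero_mul, zero_smul, add_zero] using
    hasDerivAt_Mfun A B b (hasDerivAt_const_add_smul μ Δμ 0) (hasDerivAt_const_add_smul x Δx 0) hne

theorem sq_le_Mfun : μ ^ 2 ≤ Mfun A B b μ x :=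
  le_add_of_nonneg_right (Finset.sum_nonneg fun _ _ => sq_nonneg _)

variable {A B b μ x}

theorem pairing_eq_of_perturbed_newton {β Δμ : ℝ} {Δx : Fin n → ℝ} (hΔμ : Δμ = -μ + β)
    (hΔx : HDvec A B μ x Δμ Δx = -Hvec A B b μ x) :
    μ * Δμ + ∑ i, Hvec A B b μ x i * HDvec A B μ x Δμ Δx i = μ * β - Mfun A B b μ x := by
  have hsum : ∑ i, Hvec A B b μ x i * HDvec A B μ x Δμ Δx i = -∑ i, Hvec A B b μ x i ^ 2 := by
    simp only [hΔx, Pi.neg_apply, mul_neg, Finset.sum_neg_distrib, sq]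
  rw [hsum, hΔμ, Mfun]
  ring

end Newton

theorem stmt13_general {n : ℕ} (A B : Matrix (Fin n) (Fin n) ℝ) (b : Fin n → ℝ)
    (μ : ℝ) (x : Fin n → ℝ) (β : ℝ) (hβ : μ * β < μ ^ 2) (Δμ : ℝ) (Δx : Fin n → ℝ)
    (hN1 : Δμ = -μ + β) (hN2 : HDvec A B μ x Δμ Δx = -(Hvec A B b μ x)) :
    (HasDerivAt (fun t : ℝ => Mfun A B b (μ + t * Δμ) (x + t • Δx))
        (2 * μ * (β - μ) - 2 * ∑ i, Hvec A B b μ x i ^ 2) 0 ∧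
      2 * μ * (β - μ) - 2 * ∑ i, Hvec A B b μ x i ^ 2 < 0) ∧
    (μ * Δμ + ∑ i, Hvec A B b μ x i * HDvec A B μ x Δμ Δx i =
        μ * β - Mfun A B b μ x ∧
      μ * β - Mfun A B b μ x < 0) := by
  have hμ : μ ≠ 0 := by
    rintro rfl
    simp at hβ
  have hpair := pairing_eq_of_perturbed_newton hN1 hN2
  have hneg : μ * β - Mfun A B b μ x < 0 := sub_neg.2 (hβ.trans_le (sq_le_Mfun A B b μ x))
  have hslope : 2 * μ * (β - μ) - 2 * ∑ i, Hvec A B b μ x i ^ 2 =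
      2 * (μ * β - Mfun A B b μ x) := by
    rw [Mfun]
    ring
  rw [hslope]
  exact ⟨⟨hpair ▸ hasDerivAt_Mfun_line A B b μ x hμ Δμ Δx, by linarith⟩, hpair, hneg⟩

theorem stmt13 {n : ℕ} (A B : Matrix (Fin n) (Fin n) ℝ) (b : Fin n → ℝ)
    (μ : ℝ) (x : Fin n → ℝ) (β : ℝ) (hμ : 0 < μ) (hβ0 : 0 < β) (hβμ : β < μ)
    (Δμ : ℝ) (Δx : Fin n → ℝ)
    -- the perturbed Newton system `H'(z)Δz = −H(z) + β e⁽¹⁾`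
    (hN1 : Δμ = -μ + β)
    (hN2 : HDvec A B μ x Δμ Δx = -(Hvec A B b μ x)) :
    -- the directional derivative `M'(z)Δz = 2μ(β − μ) − 2‖Ax + BΦ(μ,x) − b‖² < 0`
    (HasDerivAt (fun t : ℝ => Mfun A B b (μ + t * Δμ) (x + t • Δx))
        (2 * μ * (β - μ) - 2 * ∑ i, Hvec A B b μ x i ^ 2) 0 ∧
      2 * μ * (β - μ) - 2 * ∑ i, Hvec A B b μ x i ^ 2 < 0) ∧
    -- equivalently `⟨H(z), H'(z)Δz⟩ = μβ − ‖H(z)‖² < 0`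
    (μ * Δμ + ∑ i, Hvec A B b μ x i * HDvec A B μ x Δμ Δx i =
        μ * β - Mfun A B b μ x ∧
      μ * β - Mfun A B b μ x < 0) := by
  have hβ : μ * β < μ ^ 2 := by simpa only [sq] using mul_lt_mul_of_pos_left hβμ hμ
  exact stmt13_general A B b μ x β hβ Δμ Δx hN1 hN2
end

section
/- Suppose A + BD is nonsingular for every diagonal matrix D = diag(d_1,…,d_n) with d_i ∈ [−1,1]. Let θ, δ ∈ (0,1), let z⁽⁰⁾ = (μ⁽⁰⁾, x⁽⁰⁾) with μ⁽⁰⁾ > 0, set C⁽⁰⁾ = ‖H(z⁽⁰⁾)‖², and let γ ∈ (0,1) be such that β⁽⁰⁾ = γC⁽⁰⁾ < μ⁽⁰⁾ and γμ⁽⁰⁾ < 1. Suppose sequences {z⁽ᵏ⁾}, {C⁽ᵏ⁾}, {β⁽ᵏ⁾} satisfy, for every k with H(z⁽ᵏ⁾) ≠ 0: Δz⁽ᵏ⁾ solves H'(z⁽ᵏ⁾)Δz⁽ᵏ⁾ = −H(z⁽ᵏ⁾) + β⁽ᵏ⁾ e⁽¹⁾ (e⁽¹⁾ = (1,0)); either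 ‖H(z⁽ᵏ⁾ + Δz⁽ᵏ⁾)‖ ≤ θ‖H(z⁽ᵏ⁾)‖ and z⁽ᵏ⁺¹⁾ = z⁽ᵏ⁾ + Δz⁽ᵏ⁾, or z⁽ᵏ⁺¹⁾ = z⁽ᵏ⁾ + α⁽ᵏ⁾Δz⁽ᵏ⁾ where α⁽ᵏ⁾ is the largest element of {1, δ, δ², …} with ‖H(z⁽ᵏ⁾ + α⁽ᵏ⁾Δz⁽ᵏ⁾)‖² ≤ C⁽ᵏ⁾ − γ‖α⁽ᵏ⁾Δz⁽ᵏ⁾‖²; and C⁽ᵏ⁺¹⁾ = (C⁽ᵏ⁾ + 1)‖H(z⁽ᵏ⁺¹⁾)‖² / (‖H(z⁽ᵏ⁺¹⁾)‖² + 1), β⁽ᵏ⁺¹⁾ = γC⁽ᵏ⁺¹⁾. If H(z⁽ᵏ⁾) ≠ 0 for all k, then every accumulation point z* = (μ*, x*) of the sequence {z⁽ᵏ⁾} satisfies H(z*) = 0; that is, μ* = 0 and x* solves the GAVE Ax + B|x| = b. -/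
/-- The non-monotone line-search condition `‖H(z + αΔz)‖² ≤ C − γ‖αΔz‖²`. -/
noncomputable def LS {n : ℕ} (A B : Matrix (Fin n) (Fin n) ℝ) (b : Fin n → ℝ)
    (μ : ℝ) (x : Fin n → ℝ) (Δμ : ℝ) (Δx : Fin n → ℝ) (C γ α : ℝ) : Prop :=
  Mfun A B b (μ + α * Δμ) (x + α • Δx) ≤ C - γ * (α ^ 2 * (Δμ ^ 2 + ∑ i, Δx i ^ 2))

/-!
The reference values `C k` decrease to some `c ≥ 0`, and solving their update rule for
`‖H(z (k + 1))‖² = C (k + 1) / (1 + C k - C (k + 1))` shows that `‖H(z k)‖²` also tends to `c`.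
Suppose `c > 0`. The perturbation keeps `γ * C k ≤ μ k`, so an accumulation point has
`μ* ≥ γ * c > 0`. There `H` is smooth with invertible derivative, and the Newton directions converge
to the Newton direction at `z*`, along which `‖H‖²` has slope `2 * (γ * c * μ* - c)`.
Fast steps would contract `‖H‖²` and therefore stop; as the line search decreases `‖H‖²` by
amounts tending to zero, this slope cannot be negative, so `γ * μ* ≥ 1`. But
`γ * μ* ≤ γ * μ 0 < 1`, because `γ * (μ 0)² ≤ γ * C 0 < μ 0`.
-/

open Filter Topology Set
open scoped Matrix

section ReferenceValue

section OrderedField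

variable {K : Type*} [Field K] [LinearOrder K] [IsStrictOrderedRing K] {C m : K}

theorem le_add_one_mul_div_add_one (hm : 0 ≤ m) (h : m ≤ C) :
    m ≤ (C + 1) * m / (m + 1) := by
  rw [le_div_iff₀ (by positivity), mul_comm]
  gcongr

theorem add_one_mul_div_add_one_le (hm : 0 ≤ m) (h : m ≤ C) :
    (C + 1) * m / (m + 1) ≤ C := by
  rw [div_le_iff₀ (by positivity)]
  linear_combination h

theorem eq_div_of_eq_add_one_mul_div_add_one {C' : K} (hm : 0 ≤ m) (h : m ≤ C)
    (hC' : C' = (C + 1) * m / (m + 1)) : m = C' / (1 + C - C') := by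
  have hm' : m + 1 ≠ 0 := by positivity
  have hC : C + 1 ≠ 0 := by linarith
  have hden : 1 + C - C' = (C + 1) / (m + 1) := by
    rw [hC']
    field_simp
    ring
  rw [hden, hC']
  field_simp

end OrderedField

variable {C M : ℕ → ℝ}

theorem antitone_of_reference_update (hM : ∀ k, 0 ≤ M k) (hMC : ∀ k, M (k + 1) ≤ C k)
    (hC : ∀ k, C (k + 1) = (C k + 1) * M (k + 1) / (M (k + 1) + 1)) : Antitone C :=
  antitone_nat_of_succ_le fun k => by
    rw [hC k]
    exact add_one_mul_div_add_one_le (hM (k + 1)) (hMC k)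

theorem exists_tendsto_of_reference_update (hM : ∀ k, 0 ≤ M k) (hMC : ∀ k, M (k + 1) ≤ C k)
    (hC : ∀ k, C (k + 1) = (C k + 1) * M (k + 1) / (M (k + 1) + 1)) :
    ∃ c, Tendsto C atTop (𝓝 c) ∧ Tendsto M atTop (𝓝 c) := by
  have hbdd : BddBelow (range C) := ⟨0, forall_mem_range.2 fun k => (hM (k + 1)).trans (hMC k)⟩
  have hClim := tendsto_atTop_ciInf (antitone_of_reference_update hM hMC hC) hbdd
  have hC'lim := (tendsto_add_atTop_iff_nat 1).2 hClim
  refine ⟨_, hClim, (tendsto_add_atTop_iff_nat 1).1 ?_⟩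
  have hquot : (fun k => M (k + 1)) = fun k => C (k + 1) / (1 + C k - C (k + 1)) :=
    funext fun k => eq_div_of_eq_add_one_mul_div_add_one (hM (k + 1)) (hMC k) (hC k)
  rw [hquot]
  simpa [Pi.div_def] using hC'lim.div ((hClim.const_add 1).sub hC'lim) (by simp)

end ReferenceValue

section Relaxation

variable {μ β : ℕ → ℝ}

theorem le_of_relaxation (hβ : Antitone β) (h0 : β 0 ≤ μ 0)
    (hμ : ∀ k, ∃ α ∈ Icc (0 : ℝ) 1, μ (k + 1) = μ k + α * (-μ k + β k)) (k : ℕ) :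
    β k ≤ μ k := by
  induction k with
  | zero => exact h0
  | succ k ih =>
    obtain ⟨α, ⟨-, hα⟩, hk⟩ := hμ k
    have hβk : β (k + 1) ≤ β k := hβ k.le_succ
    have hgap : 0 ≤ (1 - α) * (μ k - β k) := mul_nonneg (by linarith) (by linarith)
    linarith

theorem antitone_of_relaxation (hβ : Antitone β) (h0 : β 0 ≤ μ 0)
    (hμ : ∀ k, ∃ α ∈ Icc (0 : ℝ) 1, μ (k + 1) = μ k + α * (-μ k + β k)) : Antitone μ :=
  antitone_nat_of_succ_le fun k => by
    obtain ⟨α, ⟨hα, -⟩, hk⟩ := hμ k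
    have hgap : 0 ≤ α * (μ k - β k) :=
      mul_nonneg hα (sub_nonneg.2 (le_of_relaxation hβ h0 hμ k))
    linarith

end Relaxation

section LineSearch

theorem exists_pow_lt_sub_of_hasDerivAt_neg {φ : ℝ → ℝ} {φ' δ : ℝ} (κ : ℝ)
    (hφ : HasDerivAt φ φ' 0) (hφ' : φ' < 0) (hδ : δ ∈ Ioo (0 : ℝ) 1) :
    ∃ L : ℕ, φ (δ ^ L) < φ 0 - κ * (δ ^ L) ^ 2 := by
  have hpow : Tendsto (fun L : ℕ => δ ^ L) atTop (𝓝[≠] 0) :=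
    tendsto_nhdsWithin_iff.2 ⟨tendsto_pow_atTop_nhds_zero_of_lt_one hδ.1.le hδ.2,
      Eventually.of_forall fun L => (pow_pos hδ.1 L).ne'⟩
  have hslope : Tendsto (fun t => t⁻¹ * (φ t - φ 0) + κ * t) (𝓝[≠] 0) (𝓝 φ') := by
    have hκ : Tendsto (fun t : ℝ => κ * t) (𝓝[≠] 0) (𝓝 0) :=
      ((continuous_const_mul κ).tendsto' 0 0 (mul_zero κ)).mono_left nhdsWithin_le_nhds
    simpa using (hasDerivAt_iff_tendsto_slope_zero.1 hφ).add hκ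
  obtain ⟨L, hL⟩ := ((hslope.comp hpow).eventually_lt_const hφ').exists
  have ht : 0 < δ ^ L := pow_pos hδ.1 L
  refine ⟨L, ?_⟩
  have hmul : (δ ^ L) * ((δ ^ L)⁻¹ * (φ (δ ^ L) - φ 0) + κ * δ ^ L) < 0 :=
    mul_neg_of_pos_of_neg ht hL
  rw [mul_add, mul_inv_cancel_left₀ ht.ne'] at hmul
  linarith

variable {E : Type*} [AddCommGroup E] [Module ℝ E]

/-- `z'` arises from `z` by the backtracking line search for `f` in direction `Δ`: the step length
is the first `α` in `1, δ, δ², …` with `f (z + α • Δ) ≤ C - γ * (α ^ 2 * N Δ)`. The function `N`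
stands for a squared norm. -/
def IsLineSearchStep (f N : E → ℝ) (δ γ C : ℝ) (z Δ z' : E) : Prop :=
  ∃ l : ℕ, (∀ m < l, ¬ f (z + δ ^ m • Δ) ≤ C - γ * ((δ ^ m) ^ 2 * N Δ)) ∧
    f (z + δ ^ l • Δ) ≤ C - γ * ((δ ^ l) ^ 2 * N Δ) ∧ z' = z + δ ^ l • Δ

/-- One globalized step from `z` to `z'`: either the full step along `Δ`, contracting `√f` by the
factor `θ`, or the backtracking line search. The first alternative is not given precedence. -/
def IsGlobalizedStep (f N : E → ℝ) (θ δ γ C : ℝ) (z Δ z' : E) : Prop :=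
  (√(f (z + Δ)) ≤ θ * √(f z) ∧ z' = z + Δ) ∨ IsLineSearchStep f N δ γ C z Δ z'

variable {f N : E → ℝ} {θ δ γ C : ℝ} {z Δ z' : E}

theorem IsLineSearchStep.le (h : IsLineSearchStep f N δ γ C z Δ z') (hN : ∀ v, 0 ≤ N v)
    (hγ : 0 ≤ γ) : f z' ≤ C := by
  obtain ⟨l, -, hl, rfl⟩ := h
  have hdecr : 0 ≤ γ * ((δ ^ l) ^ 2 * N Δ) :=
    mul_nonneg hγ (mul_nonneg (sq_nonneg _) (hN Δ))
  linarith

theorem IsLineSearchStep.le_of_accepted (h : IsLineSearchStep f N δ γ C z Δ z')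
    (hN : ∀ v, 0 ≤ N v) (hγ : 0 ≤ γ) (hδ : δ ∈ Icc (0 : ℝ) 1) {L : ℕ}
    (hL : f (z + δ ^ L • Δ) ≤ C - γ * ((δ ^ L) ^ 2 * N Δ)) :
    f z' ≤ C - γ * ((δ ^ L) ^ 2 * N Δ) := by
  obtain ⟨l, hrej, hl, rfl⟩ := h
  have hlL : l ≤ L := not_lt.1 fun hLl => hrej L hLl hL
  have hpow : δ ^ L ≤ δ ^ l := pow_le_pow_of_le_one hδ.1 hδ.2 hlL
  have hpow0 : 0 ≤ δ ^ L := pow_nonneg hδ.1 L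
  have hNΔ : 0 ≤ N Δ := hN Δ
  refine hl.trans ?_
  gcongr

theorem IsGlobalizedStep.le (h : IsGlobalizedStep f N θ δ γ C z Δ z') (hf : ∀ v, 0 ≤ f v)
    (hN : ∀ v, 0 ≤ N v) (hθ : θ ≤ 1) (hγ : 0 ≤ γ) (hz : f z ≤ C) : f z' ≤ C := by
  rcases h with ⟨hfast, rfl⟩ | hls
  · have hsqrt : √(f (z + Δ)) ≤ √(f z) :=
      hfast.trans (mul_le_of_le_one_left (Real.sqrt_nonneg _) hθ)
    exact ((Real.sqrt_le_sqrt_iff (hf z)).1 hsqrt).trans hz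
  · exact hls.le hN hγ

theorem IsGlobalizedStep.exists_eq_add_smul (h : IsGlobalizedStep f N θ δ γ C z Δ z')
    (hδ : δ ∈ Icc (0 : ℝ) 1) : ∃ α ∈ Icc (0 : ℝ) 1, z' = z + α • Δ := by
  rcases h with ⟨-, rfl⟩ | ⟨l, -, -, rfl⟩
  · exact ⟨1, right_mem_Icc.2 zero_le_one, by rw [one_smul]⟩
  · exact ⟨δ ^ l, ⟨pow_nonneg hδ.1 l, pow_le_one₀ hδ.1 hδ.2⟩, rfl⟩

theorem IsGlobalizedStep.isLineSearchStep (h : IsGlobalizedStep f N θ δ γ C z Δ z')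
    (hslow : θ * √(f z) < √(f z')) : IsLineSearchStep f N δ γ C z Δ z' := by
  rcases h with ⟨hfast, rfl⟩ | hls
  · exact absurd hfast hslow.not_ge
  · exact hls

section Limit

variable {ι : Type*} {l : Filter ι} {z Δ z' : ι → E} {C : ι → ℝ} {z₀ Δ₀ : E} {c s : ℝ}

theorem eventually_isLineSearchStep (hθ : θ < 1) (hc : 0 < c)
    (hz : Tendsto (fun i => f (z i)) l (𝓝 c)) (hz' : Tendsto (fun i => f (z' i)) l (𝓝 c))
    (h : ∀ i, IsGlobalizedStep f N θ δ γ (C i) (z i) (Δ i) (z' i)) :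
    ∀ᶠ i in l, IsLineSearchStep f N δ γ (C i) (z i) (Δ i) (z' i) := by
  have hlt : θ * √c < √c := mul_lt_of_lt_one_left (Real.sqrt_pos.2 hc) hθ
  filter_upwards [(hz.sqrt.const_mul θ).eventually_lt hz'.sqrt hlt] with i hi
  exact (h i).isLineSearchStep hi

/-- If `s < 0`, some step length `δ ^ L` is strictly acceptable at the limit, hence acceptable
nearby, so the line search stops no later and `f` drops by an amount bounded away from zero. -/
theorem nonneg_of_hasDerivAt_of_isLineSearchStep [TopologicalSpace E] [ContinuousAdd E]
    [ContinuousSMul ℝ E] [NeBot l] (hf : Continuous f) (hNcont : Continuous N)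
    (hN : ∀ v, 0 ≤ N v) (hN0 : ∀ v, N v = 0 → v = 0) (hδ : δ ∈ Ioo (0 : ℝ) 1) (hγ : 0 < γ)
    (hz : Tendsto z l (𝓝 z₀)) (hΔ : Tendsto Δ l (𝓝 Δ₀)) (hC : Tendsto C l (𝓝 (f z₀)))
    (hz' : Tendsto (fun i => f (z' i)) l (𝓝 (f z₀)))
    (h : ∀ᶠ i in l, IsLineSearchStep f N δ γ (C i) (z i) (Δ i) (z' i))
    (hs : HasDerivAt (fun t : ℝ => f (z₀ + t • Δ₀)) s 0) : 0 ≤ s := by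
  by_contra! hneg
  obtain ⟨L, hL⟩ : ∃ L : ℕ, f (z₀ + δ ^ L • Δ₀) < f z₀ - γ * ((δ ^ L) ^ 2 * N Δ₀) := by
    obtain ⟨L, hL⟩ := exists_pow_lt_sub_of_hasDerivAt_neg (γ * N Δ₀) hs hneg hδ
    refine ⟨L, ?_⟩
    rw [zero_smul, add_zero] at hL
    linarith
  have hbound : Tendsto (fun i => C i - γ * ((δ ^ L) ^ 2 * N (Δ i))) l
      (𝓝 (f z₀ - γ * ((δ ^ L) ^ 2 * N Δ₀))) :=
    hC.sub ((((hNcont.tendsto Δ₀).comp hΔ).const_mul _).const_mul γ)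
  have htrial : Tendsto (fun i => f (z i + δ ^ L • Δ i)) l (𝓝 (f (z₀ + δ ^ L • Δ₀))) :=
    (hf.tendsto _).comp (hz.add (hΔ.const_smul (δ ^ L)))
  have hdecr : ∀ᶠ i in l, f (z' i) ≤ C i - γ * ((δ ^ L) ^ 2 * N (Δ i)) := by
    filter_upwards [h, htrial.eventually_lt hbound hL] with i hi hacc
    exact hi.le_of_accepted hN hγ.le (Ioo_subset_Icc_self hδ) hacc.le
  have hNΔ : N Δ₀ = 0 := by
    have hle := le_of_tendsto_of_tendsto hz' hbound hdecr
    have hprod : (γ * (δ ^ L) ^ 2) * N Δ₀ ≤ 0 := by linarith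
    have hpos : 0 < γ * (δ ^ L) ^ 2 := mul_pos hγ (pow_pos (pow_pos hδ.1 L) 2)
    exact (nonpos_of_mul_nonpos_right hprod hpos).antisymm (hN Δ₀)
  rw [hNΔ, hN0 Δ₀ hNΔ, smul_zero, add_zero, mul_zero, mul_zero, sub_zero] at hL
  exact hL.false

end Limit

end LineSearch

section LinearSystem

variable {ι n K : Type*} [Fintype n] [DecidableEq n] [Field K] [TopologicalSpace K]
  [IsTopologicalDivisionRing K] [T1Space K] {l : Filter ι}

theorem tendsto_inv_mulVec_of_tendsto_mulVec {G : ι → Matrix n n K} {G₀ : Matrix n n K}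
    {v : ι → n → K} {r : n → K} (hG : Tendsto G l (𝓝 G₀)) (hdet : G₀.det ≠ 0)
    (hr : Tendsto (fun i => G i *ᵥ v i) l (𝓝 r)) : Tendsto v l (𝓝 (G₀⁻¹ *ᵥ r)) := by
  have hinv : Tendsto (fun i => (G i)⁻¹) l (𝓝 G₀⁻¹) := by
    refine (continuousAt_matrix_inv G₀ ?_).tendsto.comp hG
    simpa only [Ring.inverse_eq_inv'] using continuousAt_inv₀ hdet
  have hdetG : ∀ᶠ i in l, (G i).det ≠ 0 :=
    ((continuous_id.matrix_det.tendsto G₀).comp hG).eventually_ne hdet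
  have hmulVec : Continuous fun p : Matrix n n K × (n → K) => p.1 *ᵥ p.2 :=
    continuous_fst.matrix_mulVec continuous_snd
  refine ((hmulVec.tendsto _).comp (hinv.prodMk_nhds hr)).congr' ?_
  filter_upwards [hdetG] with i hi
  simp [Matrix.mulVec_mulVec, Matrix.nonsing_inv_mul _ (isUnit_iff_ne_zero.2 hi)]

end LinearSystem

section SqNorm

variable {ι : Type*} [Fintype ι]

/-- The squared Euclidean norm on `ℝ × ℝⁿ`; Mathlib's norm on this product is the sup norm. -/
def sqNorm (v : ℝ × (ι → ℝ)) : ℝ :=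
  v.1 ^ 2 + ∑ i, v.2 i ^ 2

theorem sqNorm_nonneg (v : ℝ × (ι → ℝ)) : 0 ≤ sqNorm v := by
  unfold sqNorm
  positivity

theorem eq_zero_of_sqNorm_eq_zero (v : ℝ × (ι → ℝ)) (h : sqNorm v = 0) : v = 0 := by
  have hsum : 0 ≤ ∑ i, v.2 i ^ 2 := by positivity
  obtain ⟨hfst, hsnd⟩ := (add_eq_zero_iff_of_nonneg (sq_nonneg v.1) hsum).1 h
  rw [Finset.sum_eq_zero_iff_of_nonneg fun i _ => sq_nonneg _] at hsnd
  exact Prod.ext (pow_eq_zero_iff two_ne_zero |>.1 hfst)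
    (funext fun i => pow_eq_zero_iff two_ne_zero |>.1 (hsnd i (Finset.mem_univ i)))

theorem continuous_sqNorm : Continuous (sqNorm : ℝ × (ι → ℝ) → ℝ) := by
  unfold sqNorm
  fun_prop

theorem hasDerivAt_sqNorm_comp {u : ℝ → ℝ × (ι → ℝ)} {u' : ℝ × (ι → ℝ)} {t : ℝ}
    (h : HasDerivAt u u' t) :
    HasDerivAt (fun s => sqNorm (u s)) (2 * ((u t).1 * u'.1 + (u t).2 ⬝ᵥ u'.2)) t := by
  have hfst : HasDerivAt (fun s => (u s).1) u'.1 t := h.fst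
  have hsnd (i : ι) : HasDerivAt (fun s => (u s).2 i) (u'.2 i) t := hasDerivAt_pi.1 h.snd i
  refine ((hfst.fun_pow 2).add
    (HasDerivAt.fun_sum fun i _ => (hsnd i).fun_pow 2)).congr_deriv ?_
  simp only [dotProduct, mul_add, Finset.mul_sum, Nat.cast_ofNat, Nat.add_one_sub_one, pow_one,
    mul_assoc]

end SqNorm

section SmoothedEquation

variable {n : ℕ}

/-- The vector `V₁ = ∂Φ/∂μ` of the derivative of `Φ`. -/
noncomputable def phiDerivMu (μ : ℝ) (x : Fin n → ℝ) : Fin n → ℝ :=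
  fun i => μ / √(μ ^ 2 + x i ^ 2) - 1

/-- The diagonal of the matrix `V₂ = ∂Φ/∂x` of the derivative of `Φ`. -/
noncomputable def phiDerivX (μ : ℝ) (x : Fin n → ℝ) : Fin n → ℝ :=
  fun i => x i / √(μ ^ 2 + x i ^ 2)

/-- The map `H(z) = (μ, Ax + BΦ(μ, x) − b)`. -/
noncomputable def gaveMap (A B : Matrix (Fin n) (Fin n) ℝ) (b : Fin n → ℝ)
    (z : ℝ × (Fin n → ℝ)) : ℝ × (Fin n → ℝ) :=
  (z.1, Hvec A B b z.1 z.2)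

/-- The merit function `‖H(z)‖²`, that is, `Mfun` as a function of the pair `z = (μ, x)`. -/
noncomputable def merit (A B : Matrix (Fin n) (Fin n) ℝ) (b : Fin n → ℝ)
    (z : ℝ × (Fin n → ℝ)) : ℝ :=
  sqNorm (gaveMap A B b z)

/-- `Δ` solves the perturbed Newton system `H'(z)Δ = −H(z) + βe⁽¹⁾`. -/
def IsNewtonDirection (A B : Matrix (Fin n) (Fin n) ℝ) (b : Fin n → ℝ) (β : ℝ)
    (z Δ : ℝ × (Fin n → ℝ)) : Prop :=
  Δ.1 = -z.1 + β ∧ HDvec A B z.1 z.2 Δ.1 Δ.2 = -Hvec A B b z.1 z.2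

theorem phiDerivX_mem_Ioo {μ : ℝ} (hμ : μ ≠ 0) (x : Fin n → ℝ) (i : Fin n) :
    phiDerivX μ x i ∈ Ioo (-1 : ℝ) 1 := by
  have hpos : 0 < √(μ ^ 2 + x i ^ 2) := by positivity
  rw [mem_Ioo, ← abs_lt, phiDerivX, abs_div, abs_of_pos hpos, div_lt_one hpos]
  refine Real.lt_sqrt_of_sq_lt ?_
  rw [sq_abs]
  exact lt_add_of_pos_left _ (sq_pos_of_ne_zero hμ)

theorem continuousAt_phiDerivMu {z : ℝ × (Fin n → ℝ)} (hz : z.1 ≠ 0) :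
    ContinuousAt (fun w : ℝ × (Fin n → ℝ) => phiDerivMu w.1 w.2) z :=
  continuousAt_pi.2 fun i => by
    have hsqrt : √(z.1 ^ 2 + z.2 i ^ 2) ≠ 0 := by positivity
    unfold phiDerivMu
    fun_prop (disch := assumption)

theorem continuousAt_phiDerivX {z : ℝ × (Fin n → ℝ)} (hz : z.1 ≠ 0) :
    ContinuousAt (fun w : ℝ × (Fin n → ℝ) => phiDerivX w.1 w.2) z :=
  continuousAt_pi.2 fun i => by
    have hsqrt : √(z.1 ^ 2 + z.2 i ^ 2) ≠ 0 := by positivity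
    unfold phiDerivX
    fun_prop (disch := assumption)

theorem hasDerivAt_PhiV_line {μ : ℝ} (hμ : μ ≠ 0) (x : Fin n → ℝ) (dμ : ℝ) (dx : Fin n → ℝ) :
    HasDerivAt (fun t : ℝ => PhiV (μ + t * dμ) (x + t • dx))
      (dμ • phiDerivMu μ x + phiDerivX μ x * dx) 0 := by
  refine hasDerivAt_pi.2 fun i => ?_
  have hline (a d : ℝ) : HasDerivAt (fun t : ℝ => a + t * d) d 0 :=
    (hasDerivAt_mul_const d).const_add a
  have hsq : (μ + 0 * dμ) ^ 2 + (x i + 0 * dx i) ^ 2 ≠ 0 := by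
    rw [zero_mul, zero_mul, add_zero, add_zero]
    positivity
  have hsqrt : √(μ ^ 2 + x i ^ 2) ≠ 0 := by positivity
  refine (((((hline μ dμ).fun_pow 2).fun_add ((hline (x i) (dx i)).fun_pow 2)).sqrt hsq).sub
    (hline μ dμ)).congr_deriv ?_
  simp only [phiDerivMu, phiDerivX, Pi.add_apply, Pi.smul_apply, Pi.mul_apply, smul_eq_mul,
    zero_mul, add_zero]
  field_simp
  push_cast
  ring

variable (A B : Matrix (Fin n) (Fin n) ℝ) (b : Fin n → ℝ)

theorem HDvec_eq_add_mulVec (μ : ℝ) (x : Fin n → ℝ) (dμ : ℝ) (dx : Fin n → ℝ) :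
    HDvec A B μ x dμ dx =
      A *ᵥ dx + B *ᵥ (dμ • phiDerivMu μ x + phiDerivX μ x * dx) :=
  rfl

theorem HDvec_eq_mulVec_add (μ : ℝ) (x : Fin n → ℝ) (dμ : ℝ) (dx : Fin n → ℝ) :
    HDvec A B μ x dμ dx =
      (A + B * Matrix.diagonal (phiDerivX μ x)) *ᵥ dx + B *ᵥ (dμ • phiDerivMu μ x) := by
  have hdiag : phiDerivX μ x * dx = Matrix.diagonal (phiDerivX μ x) *ᵥ dx :=
    funext fun i => (Matrix.mulVec_diagonal _ _ i).symm
  rw [HDvec_eq_add_mulVec, hdiag, Matrix.mulVec_add, Matrix.mulVec_mulVec, Matrix.add_mulVec]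
  abel

theorem hasDerivAt_Hvec_line {μ : ℝ} (hμ : μ ≠ 0) (x : Fin n → ℝ) (dμ : ℝ) (dx : Fin n → ℝ) :
    HasDerivAt (fun t : ℝ => Hvec A B b (μ + t * dμ) (x + t • dx)) (HDvec A B μ x dμ dx) 0 := by
  have hx : HasDerivAt (fun t : ℝ => x + t • dx) dx 0 := by
    simpa using ((hasDerivAt_id (0 : ℝ)).smul_const dx).const_add x
  have hA := A.mulVecLin.toContinuousLinearMap.hasFDerivAt.comp_hasDerivAt 0 hx
  have hB := B.mulVecLin.toContinuousLinearMap.hasFDerivAt.comp_hasDerivAt 0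
    (hasDerivAt_PhiV_line hμ x dμ dx)
  exact (hA.add hB).sub_const b

theorem hasDerivAt_gaveMap_line {z : ℝ × (Fin n → ℝ)} (hz : z.1 ≠ 0) (Δ : ℝ × (Fin n → ℝ)) :
    HasDerivAt (fun t : ℝ => gaveMap A B b (z + t • Δ))
      (Δ.1, HDvec A B z.1 z.2 Δ.1 Δ.2) 0 :=
  ((hasDerivAt_mul_const Δ.1).const_add z.1).prodMk (hasDerivAt_Hvec_line A B b hz z.2 Δ.1 Δ.2)

theorem continuous_Hvec : Continuous fun z : ℝ × (Fin n → ℝ) => Hvec A B b z.1 z.2 := by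
  unfold Hvec PhiV
  fun_prop

theorem continuous_merit : Continuous (merit A B b) :=
  continuous_sqNorm.comp (continuous_fst.prodMk (continuous_Hvec A B b))

theorem merit_nonneg (z : ℝ × (Fin n → ℝ)) : 0 ≤ merit A B b z :=
  sqNorm_nonneg _

theorem sq_le_merit (z : ℝ × (Fin n → ℝ)) : z.1 ^ 2 ≤ merit A B b z :=
  le_add_of_nonneg_right (Finset.sum_nonneg fun _ _ => sq_nonneg _)

theorem Hvec_zero_left (x : Fin n → ℝ) :
    Hvec A B b 0 x = A *ᵥ x + B *ᵥ (fun i => |x i|) - b := by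
  have hΦ : PhiV 0 x = fun i => |x i| := by
    ext i
    simp [PhiV, Real.sqrt_sq_eq_abs]
  rw [Hvec, hΦ]

variable {A B b}

theorem isSolution_of_merit_eq_zero {z : ℝ × (Fin n → ℝ)} (h : merit A B b z = 0) :
    z.1 = 0 ∧ Hvec A B b z.1 z.2 = 0 ∧ A *ᵥ z.2 + B *ᵥ (fun i => |z.2 i|) = b := by
  obtain ⟨hμ, hH⟩ := Prod.mk_eq_zero.1 (eq_zero_of_sqNorm_eq_zero _ h)
  refine ⟨hμ, hH, ?_⟩
  rwa [hμ, Hvec_zero_left, sub_eq_zero] at hH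

theorem IsNewtonDirection.hasDerivAt_merit {β : ℝ} {z Δ : ℝ × (Fin n → ℝ)}
    (h : IsNewtonDirection A B b β z Δ) (hz : z.1 ≠ 0) :
    HasDerivAt (fun t : ℝ => merit A B b (z + t • Δ)) (2 * (β * z.1 - merit A B b z)) 0 := by
  have hH : HasDerivAt (fun t : ℝ => gaveMap A B b (z + t • Δ))
      (-z.1 + β, -Hvec A B b z.1 z.2) 0 := by
    rw [← h.1, ← h.2]
    exact hasDerivAt_gaveMap_line A B b hz Δ
  refine (hasDerivAt_sqNorm_comp hH).congr_deriv ?_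
  rw [zero_smul, add_zero]
  simp only [merit, sqNorm, gaveMap, dotProduct_neg]
  simp only [dotProduct, ← sq]
  ring

theorem exists_tendsto_of_isNewtonDirection {ι : Type*} {l : Filter ι} {β : ι → ℝ} {β₀ : ℝ}
    {z Δ : ι → ℝ × (Fin n → ℝ)} {z₀ : ℝ × (Fin n → ℝ)}
    (hdet : (A + B * Matrix.diagonal (phiDerivX z₀.1 z₀.2)).det ≠ 0) (hz₀ : z₀.1 ≠ 0)
    (hβ : Tendsto β l (𝓝 β₀)) (hz : Tendsto z l (𝓝 z₀))
    (h : ∀ i, IsNewtonDirection A B b (β i) (z i) (Δ i)) :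
    ∃ Δ₀, Tendsto Δ l (𝓝 Δ₀) ∧ IsNewtonDirection A B b β₀ z₀ Δ₀ := by
  set G := fun w : ℝ × (Fin n → ℝ) => A + B * Matrix.diagonal (phiDerivX w.1 w.2)
  set r := fun p : ℝ × (ℝ × (Fin n → ℝ)) =>
    -Hvec A B b p.2.1 p.2.2 - B *ᵥ ((-p.2.1 + p.1) • phiDerivMu p.2.1 p.2.2)
  have hsystem (i : ι) : G (z i) *ᵥ (Δ i).2 = r (β i, z i) := by
    rw [eq_sub_iff_add_eq, ← (h i).1, ← HDvec_eq_mulVec_add]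
    exact (h i).2
  have hG : Tendsto (fun i => G (z i)) l (𝓝 (G z₀)) := by
    have hcont : Continuous fun d : Fin n → ℝ => A + B * Matrix.diagonal d := by fun_prop
    exact (hcont.tendsto _).comp ((continuousAt_phiDerivX hz₀).tendsto.comp hz)
  have hμ : Tendsto (fun i => -(z i).1 + β i) l (𝓝 (-z₀.1 + β₀)) := hz.fst_nhds.neg.add hβ
  have hr : Tendsto (fun i => r (β i, z i)) l (𝓝 (r (β₀, z₀))) := by
    have hV₁ := hμ.smul ((continuousAt_phiDerivMu hz₀).tendsto.comp hz)
    have hB : Continuous fun v : Fin n → ℝ => B *ᵥ v := by fun_prop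
    exact (((continuous_Hvec A B b).tendsto z₀).comp hz).neg.sub ((hB.tendsto _).comp hV₁)
  refine ⟨(-z₀.1 + β₀, (G z₀)⁻¹ *ᵥ r (β₀, z₀)), ?_, rfl, ?_⟩
  · have hx := tendsto_inv_mulVec_of_tendsto_mulVec hG hdet (hr.congr fun i => (hsystem i).symm)
    exact (hμ.congr fun i => (h i).1.symm).prodMk_nhds hx
  · rw [HDvec_eq_mulVec_add, ← eq_sub_iff_add_eq]
    simp [G, r, Matrix.mulVec_mulVec, Matrix.mul_nonsing_inv _ (isUnit_iff_ne_zero.2 hdet)]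

end SmoothedEquation

section Iteration

variable {n : ℕ}

/-- The non-monotone smoothing Newton iteration with perturbation `β⁽ᵏ⁾ = γC⁽ᵏ⁾`. -/
structure IsSmoothingNewtonIteration (A B : Matrix (Fin n) (Fin n) ℝ) (b : Fin n → ℝ)
    (θ δ γ : ℝ) (z : ℕ → ℝ × (Fin n → ℝ)) (C : ℕ → ℝ) : Prop where
  merit_le_init : merit A B b (z 0) ≤ C 0
  exists_step : ∀ k, ∃ Δ, IsNewtonDirection A B b (γ * C k) (z k) Δ ∧
    IsGlobalizedStep (merit A B b) sqNorm θ δ γ (C k) (z k) Δ (z (k + 1))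
  update : ∀ k, C (k + 1) =
    (C k + 1) * merit A B b (z (k + 1)) / (merit A B b (z (k + 1)) + 1)

namespace IsSmoothingNewtonIteration

variable {A B : Matrix (Fin n) (Fin n) ℝ} {b : Fin n → ℝ} {θ δ γ : ℝ}
  {z : ℕ → ℝ × (Fin n → ℝ)} {C : ℕ → ℝ}

theorem merit_succ_le_of_merit_le (h : IsSmoothingNewtonIteration A B b θ δ γ z C) (hθ : θ ≤ 1)
    (hγ : 0 ≤ γ) {k : ℕ} (hk : merit A B b (z k) ≤ C k) : merit A B b (z (k + 1)) ≤ C k := by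
  obtain ⟨Δ, -, hstep⟩ := h.exists_step k
  exact hstep.le (merit_nonneg A B b) sqNorm_nonneg hθ hγ hk

theorem merit_le (h : IsSmoothingNewtonIteration A B b θ δ γ z C) (hθ : θ ≤ 1) (hγ : 0 ≤ γ)
    (k : ℕ) : merit A B b (z k) ≤ C k := by
  induction k with
  | zero => exact h.merit_le_init
  | succ k ih =>
    rw [h.update]
    exact le_add_one_mul_div_add_one (merit_nonneg A B b _) (h.merit_succ_le_of_merit_le hθ hγ ih)

theorem merit_succ_le (h : IsSmoothingNewtonIteration A B b θ δ γ z C) (hθ : θ ≤ 1) (hγ : 0 ≤ γ)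
    (k : ℕ) : merit A B b (z (k + 1)) ≤ C k :=
  h.merit_succ_le_of_merit_le hθ hγ (h.merit_le hθ hγ k)

theorem antitone (h : IsSmoothingNewtonIteration A B b θ δ γ z C) (hθ : θ ≤ 1) (hγ : 0 ≤ γ) :
    Antitone C :=
  antitone_of_reference_update (fun _ => merit_nonneg A B b _) (h.merit_succ_le hθ hγ) h.update

theorem exists_tendsto (h : IsSmoothingNewtonIteration A B b θ δ γ z C) (hθ : θ ≤ 1)
    (hγ : 0 ≤ γ) :
    ∃ c, Tendsto C atTop (𝓝 c) ∧ Tendsto (fun k => merit A B b (z k)) atTop (𝓝 c) :=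
  exists_tendsto_of_reference_update (fun _ => merit_nonneg A B b _) (h.merit_succ_le hθ hγ)
    h.update

theorem exists_fst_succ_eq (h : IsSmoothingNewtonIteration A B b θ δ γ z C)
    (hδ : δ ∈ Icc (0 : ℝ) 1) (k : ℕ) :
    ∃ α ∈ Icc (0 : ℝ) 1, (z (k + 1)).1 = (z k).1 + α * (-(z k).1 + γ * C k) := by
  obtain ⟨Δ, hΔ, hstep⟩ := h.exists_step k
  obtain ⟨α, hα, hz⟩ := hstep.exists_eq_add_smul hδ
  refine ⟨α, hα, ?_⟩
  rw [hz, ← hΔ.1]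
  rfl

theorem perturbation_le_fst (h : IsSmoothingNewtonIteration A B b θ δ γ z C) (hθ : θ ≤ 1)
    (hδ : δ ∈ Icc (0 : ℝ) 1) (hγ : 0 ≤ γ) (h0 : γ * C 0 ≤ (z 0).1) (k : ℕ) :
    γ * C k ≤ (z k).1 :=
  le_of_relaxation (μ := fun k => (z k).1) ((h.antitone hθ hγ).const_mul hγ) h0
    (h.exists_fst_succ_eq hδ) k

theorem fst_le_fst_zero (h : IsSmoothingNewtonIteration A B b θ δ γ z C) (hθ : θ ≤ 1)
    (hδ : δ ∈ Icc (0 : ℝ) 1) (hγ : 0 ≤ γ) (h0 : γ * C 0 ≤ (z 0).1) (k : ℕ) :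
    (z k).1 ≤ (z 0).1 :=
  antitone_of_relaxation (μ := fun k => (z k).1) ((h.antitone hθ hγ).const_mul hγ) h0
    (h.exists_fst_succ_eq hδ) k.zero_le

theorem mul_fst_zero_lt_one (h : IsSmoothingNewtonIteration A B b θ δ γ z C) (hγ : 0 < γ)
    (h0 : γ * C 0 < (z 0).1) : γ * (z 0).1 < 1 := by
  have hsq : (z 0).1 ^ 2 ≤ C 0 := (sq_le_merit A B b (z 0)).trans h.merit_le_init
  have hpos : 0 < (z 0).1 := (mul_nonneg hγ.le ((sq_nonneg _).trans hsq)).trans_lt h0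
  have hlt : (γ * (z 0).1) * (z 0).1 < 1 * (z 0).1 :=
    calc (γ * (z 0).1) * (z 0).1 = γ * (z 0).1 ^ 2 := by ring
      _ ≤ γ * C 0 := by gcongr
      _ < 1 * (z 0).1 := by rwa [one_mul]
  exact lt_of_mul_lt_mul_right hlt hpos.le

theorem le_mul_fst_of_tendsto (h : IsSmoothingNewtonIteration A B b θ δ γ z C)
    (hθ : θ < 1) (hδ : δ ∈ Ioo (0 : ℝ) 1) (hγ : 0 < γ) {l : Filter ℕ} [NeBot l] (hl : l ≤ atTop)
    {z₀ : ℝ × (Fin n → ℝ)} (hz : Tendsto z l (𝓝 z₀)) (hz₀ : z₀.1 ≠ 0)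
    (hdet : (A + B * Matrix.diagonal (phiDerivX z₀.1 z₀.2)).det ≠ 0)
    (hpos : 0 < merit A B b z₀) (hC : Tendsto C atTop (𝓝 (merit A B b z₀)))
    (hM : Tendsto (fun k => merit A B b (z k)) atTop (𝓝 (merit A B b z₀))) :
    merit A B b z₀ ≤ γ * merit A B b z₀ * z₀.1 := by
  choose Δ hΔ hstep using h.exists_step
  have hM' := ((tendsto_add_atTop_iff_nat 1).2 hM).mono_left hl
  obtain ⟨Δ₀, hΔlim, hΔ₀⟩ :=
    exists_tendsto_of_isNewtonDirection hdet hz₀ ((hC.mono_left hl).const_mul γ) hz hΔ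
  have hslope := nonneg_of_hasDerivAt_of_isLineSearchStep (continuous_merit A B b)
    continuous_sqNorm sqNorm_nonneg eq_zero_of_sqNorm_eq_zero hδ hγ hz hΔlim (hC.mono_left hl) hM'
    (eventually_isLineSearchStep hθ hpos (hM.mono_left hl) hM' hstep)
    (hΔ₀.hasDerivAt_merit hz₀)
  linarith

theorem merit_eq_zero_of_mapClusterPt (h : IsSmoothingNewtonIteration A B b θ δ γ z C)
    (hAB : ∀ d : Fin n → ℝ, (∀ i, d i ∈ Ioo (-1 : ℝ) 1) → (A + B * Matrix.diagonal d).det ≠ 0)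
    (hθ : θ < 1) (hδ : δ ∈ Ioo (0 : ℝ) 1) (hγ : 0 < γ) (h0 : γ * C 0 < (z 0).1)
    {z₀ : ℝ × (Fin n → ℝ)} (hz₀ : MapClusterPt z₀ atTop z) : merit A B b z₀ = 0 := by
  obtain ⟨U, hU, hz⟩ := mapClusterPt_iff_ultrafilter.1 hz₀
  obtain ⟨c, hC, hM⟩ := h.exists_tendsto hθ.le hγ.le
  obtain rfl : merit A B b z₀ = c :=
    tendsto_nhds_unique (((continuous_merit A B b).tendsto z₀).comp hz) (hM.mono_left hU)
  have hδ' := Ioo_subset_Icc_self hδ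
  by_contra hne
  have hpos : 0 < merit A B b z₀ := (merit_nonneg A B b z₀).lt_of_ne' hne
  have hμ_ge : γ * merit A B b z₀ ≤ z₀.1 :=
    le_of_tendsto_of_tendsto' ((hC.mono_left hU).const_mul γ) hz.fst_nhds
      (h.perturbation_le_fst hθ.le hδ' hγ.le h0.le)
  have hμ_ne : z₀.1 ≠ 0 := ((mul_pos hγ hpos).trans_le hμ_ge).ne'
  have hμ_le : z₀.1 ≤ (z 0).1 :=
    le_of_tendsto' hz.fst_nhds (h.fst_le_fst_zero hθ.le hδ' hγ.le h0.le)
  have hγμ : γ * z₀.1 < 1 :=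
    (mul_le_mul_of_nonneg_left hμ_le hγ.le).trans_lt (h.mul_fst_zero_lt_one hγ h0)
  have hle := h.le_mul_fst_of_tendsto hθ hδ hγ hU hz hμ_ne
    (hAB _ (phiDerivX_mem_Ioo hμ_ne z₀.2)) hpos hC hM
  have hlt : (γ * z₀.1) * merit A B b z₀ < 1 * merit A B b z₀ :=
    mul_lt_mul_of_pos_right hγμ hpos
  linarith

end IsSmoothingNewtonIteration

end Iteration

theorem stmt18_general {n : ℕ} {A B : Matrix (Fin n) (Fin n) ℝ} {b : Fin n → ℝ}
    (hAB : ∀ d : Fin n → ℝ, (∀ i, d i ∈ Ioo (-1 : ℝ) 1) → (A + B * Matrix.diagonal d).det ≠ 0)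
    {θ δ γ : ℝ} (hθ : θ < 1) (hδ : δ ∈ Ioo (0 : ℝ) 1) (hγ : 0 < γ)
    {z : ℕ → ℝ × (Fin n → ℝ)} {C : ℕ → ℝ} (h : IsSmoothingNewtonIteration A B b θ δ γ z C)
    (h0 : γ * C 0 < (z 0).1) {zstar : ℝ × (Fin n → ℝ)} (hacc : MapClusterPt zstar atTop z) :
    zstar.1 = 0 ∧ Hvec A B b zstar.1 zstar.2 = 0 ∧
      A *ᵥ zstar.2 + B *ᵥ (fun i => |zstar.2 i|) = b :=
  isSolution_of_merit_eq_zero (h.merit_eq_zero_of_mapClusterPt hAB hθ hδ hγ h0 hacc)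

theorem stmt18 {n : ℕ} (A B : Matrix (Fin n) (Fin n) ℝ) (b : Fin n → ℝ)
    (hAB : ∀ d : Fin n → ℝ, (∀ i, d i ∈ Set.Icc (-1 : ℝ) 1) →
      (A + B * Matrix.diagonal d).det ≠ 0)
    (θ δ γ : ℝ) (hθ : θ ∈ Set.Ioo (0 : ℝ) 1) (hδ : δ ∈ Set.Ioo (0 : ℝ) 1)
    (hγ : γ ∈ Set.Ioo (0 : ℝ) 1)
    (z : ℕ → ℝ × (Fin n → ℝ)) (C β : ℕ → ℝ)
    (hμ0 : 0 < (z 0).1)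
    (hC0 : C 0 = Mfun A B b (z 0).1 (z 0).2)
    (hβ0 : β 0 = γ * C 0) (hβ0μ : β 0 < (z 0).1) (hγμ0 : γ * (z 0).1 < 1)
    -- the iteration: for every `k` with `H(z⁽ᵏ⁾) ≠ 0`, `Δz⁽ᵏ⁾` solves the perturbed
    -- Newton system and `z⁽ᵏ⁺¹⁾` is produced by the fast step or by the non-monotone
    -- line search with the largest step length in `{1, δ, δ², …}`
    (hstep : ∀ k : ℕ,
      (((z k).1, Hvec A B b (z k).1 (z k).2) : ℝ × (Fin n → ℝ)) ≠ 0 →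
      ∃ Δ : ℝ × (Fin n → ℝ),
        (Δ.1 = -(z k).1 + β k ∧
          HDvec A B (z k).1 (z k).2 Δ.1 Δ.2 = -(Hvec A B b (z k).1 (z k).2)) ∧
        ((Real.sqrt (Mfun A B b ((z k).1 + Δ.1) ((z k).2 + Δ.2)) ≤
            θ * Real.sqrt (Mfun A B b (z k).1 (z k).2) ∧
          z (k + 1) = z k + Δ) ∨
         (¬ (Real.sqrt (Mfun A B b ((z k).1 + Δ.1) ((z k).2 + Δ.2)) ≤
            θ * Real.sqrt (Mfun A B b (z k).1 (z k).2)) ∧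
          ∃ l : ℕ,
            (∀ m : ℕ, m < l → ¬ LS A B b (z k).1 (z k).2 Δ.1 Δ.2 (C k) γ (δ ^ m)) ∧
            LS A B b (z k).1 (z k).2 Δ.1 Δ.2 (C k) γ (δ ^ l) ∧
            z (k + 1) = z k + δ ^ l • Δ)))
    (hupd : ∀ k : ℕ,
      C (k + 1) = (C k + 1) * Mfun A B b (z (k + 1)).1 (z (k + 1)).2 /
          (Mfun A B b (z (k + 1)).1 (z (k + 1)).2 + 1) ∧
        β (k + 1) = γ * C (k + 1))
    (hne : ∀ k : ℕ, (((z k).1, Hvec A B b (z k).1 (z k).2) : ℝ × (Fin n → ℝ)) ≠ 0)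
    (zstar : ℝ × (Fin n → ℝ))
    (hacc : ∃ σ : ℕ → ℕ, StrictMono σ ∧
      Filter.Tendsto (fun j => z (σ j)) Filter.atTop (nhds zstar)) :
    zstar.1 = 0 ∧ Hvec A B b zstar.1 zstar.2 = 0 ∧
      A.mulVec zstar.2 + B.mulVec (fun i => |zstar.2 i|) = b := by
  have hβ : ∀ k, β k = γ * C k := fun
    | 0 => hβ0
    | k + 1 => (hupd k).2
  have hiter : IsSmoothingNewtonIteration A B b θ δ γ z C :=
    { merit_le_init := hC0.ge
      exists_step := fun k => by
        obtain ⟨Δ, hΔ, hstep⟩ := hstep k (hne k)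
        exact ⟨Δ, hβ k ▸ hΔ, hstep.imp_right And.right⟩
      update := fun k => (hupd k).1 }
  obtain ⟨σ, hσ, hlim⟩ := hacc
  exact stmt18_general (fun d hd => hAB d fun i => Ioo_subset_Icc_self (hd i)) hθ.2 hδ hγ.1 hiter
    (hβ0 ▸ hβ0μ) (hlim.mapClusterPt.of_comp hσ.tendsto_atTop)
end
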